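/- arXiv:1111.4319 — 4 statements merged into one kernel-verified Lean document; each statement's English description precedes it below -/
import Mathlib

section
/- Let q be a prime power and let s ≥ 2 be an integer. Then 𝒞_q(2s+1, 2s−1, s) ≥ (q^{2s+2}−q^2)/(q^2−1) + (q^{s+1}−1)/(q−1). -/
open Module

/-- `coveringNumber F n k r` is the minimum number of `k`-dimensional `F`-linear subspaces
of `F^n` needed so that every `r`-dimensional subspace is contained in at least one of them. -/
noncomputable def coveringNumber (F : Type) [Field F] (n k r : ℕ) : ℕ :=
  sInf { m : ℕ | ∃ S : Finset (Submodule F (Fin n → F)),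
    S.card = m ∧
    (∀ X ∈ S, finrank F X = k) ∧
    (∀ Y : Submodule F (Fin n → F), finrank F Y = r → ∃ X ∈ S, Y ≤ X) }

namespace EM
open Finset Module
open scoped Classical
set_option linter.unusedSectionVars false

section basic
variable {F V : Type} [Field F] [Fintype F] [AddCommGroup V] [Module F V] [Fintype V]

/-- the finset of vectors of a subspace -/
noncomputable def vec (U : Submodule F V) : Finset V := univ.filter (fun v => v ∈ U)

noncomputable def rr (L : Finset (Submodule F V)) (v : V) : ℤ :=
  ((L.filter (fun l => v ∈ l)).card : ℤ)

noncomputable def al (L : Finset (Submodule F V)) (v : V) : ℤ :=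
  if v = 0 then 0 else rr L v - Fintype.card F

noncomputable def SS (L : Finset (Submodule F V)) (U : Submodule F V) : ℤ :=
  ∑ v ∈ vec U, al L v

noncomputable def nf (L : Finset (Submodule F V)) (f : Dual F V) : ℤ :=
  ((L.filter (fun l => l ≤ LinearMap.ker f)).card : ℤ)

theorem mem_vec {U : Submodule F V} {v : V} : v ∈ vec U ↔ v ∈ U := by
  simp [vec]

theorem card_vec (U : Submodule F V) : (vec U).card = Fintype.card F ^ finrank F U := by
  have := Module.natCard_eq_pow_finrank (K := F) (V := U)
  rw [Nat.card_eq_fintype_card (α := F)] at this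
  rw [← this, vec, Nat.card_eq_fintype_card, Fintype.card_subtype]

theorem finrank_sup_span {U : Submodule F V} {w : V} (hw : w ∉ U) :
    finrank F ↥(U ⊔ Submodule.span F {w}) = finrank F U + 1 := by
  have h := Submodule.finrank_sup_add_finrank_inf_eq U (Submodule.span F {w})
  have hw0 : w ≠ 0 := by rintro rfl; exact hw U.zero_mem
  rw [finrank_span_singleton hw0] at h
  have : U ⊓ Submodule.span F {w} = ⊥ := by
    rw [← disjoint_iff, Submodule.disjoint_span_singleton' hw0]
    exact hw
  rw [this] at h
  simpa using h

theorem ker_ne {f : Dual F V} {n : ℕ} (hf : f ≠ 0) (hn : finrank F V = n + 1) :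
    finrank F (LinearMap.ker f) = n := by
  have := LinearMap.finrank_range_add_finrank_ker f
  rw [LinearMap.range_eq_top.2 (LinearMap.surjective hf)] at this
  simp at this
  omega

/-- double counting: vectors of U against lines -/
theorem sum_rr (L : Finset (Submodule F V)) (U : Submodule F V) :
    ∑ v ∈ (vec U).erase 0, rr L v = ∑ l ∈ L, (((vec (l ⊓ U)).card : ℤ) - 1) := by
  have h1 : ∀ v, rr L v = ∑ l ∈ L, if v ∈ l then (1:ℤ) else 0 := by
    intro v
    simp [rr]
  simp_rw [h1]
  rw [Finset.sum_comm]
  apply Finset.sum_congr rfl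
  intro l hl
  rw [← Finset.sum_filter]
  have : (filter (fun v => v ∈ l) ((vec U).erase 0)) = (vec (l ⊓ U)).erase 0 := by
    ext v
    simp [mem_vec]; tauto
  rw [this]
  have h0 : (0:V) ∈ vec (l ⊓ U) := by simp [mem_vec]
  rw [Finset.sum_const, Finset.card_erase_of_mem h0]
  have : 1 ≤ (vec (l ⊓ U)).card := Finset.card_pos.2 ⟨0, h0⟩
  simp [Nat.cast_sub this]

theorem SS_eq (L : Finset (Submodule F V)) (U : Submodule F V) :
    SS L U = ∑ l ∈ L, (((vec (l ⊓ U)).card : ℤ) - 1)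
      - (Fintype.card F : ℤ) * ((Fintype.card F : ℤ) ^ finrank F U - 1) := by
  have h0 : (0:V) ∈ vec U := by simp [mem_vec]
  rw [SS, ← Finset.add_sum_erase _ _ h0, ← sum_rr]
  have : al L 0 = 0 := by simp [al]
  rw [this, zero_add]
  have h2 : ∀ v ∈ (vec U).erase 0, al L v = rr L v - Fintype.card F := by
    intro v hv
    simp at hv
    simp [al, hv.1]
  rw [Finset.sum_congr rfl h2, Finset.sum_sub_distrib, Finset.sum_const,
    Finset.card_erase_of_mem h0]
  have : 1 ≤ (vec U).card := Finset.card_pos.2 ⟨0, h0⟩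
  rw [nsmul_eq_mul, Nat.cast_sub this, card_vec]
  push_cast
  ring

variable [Fintype (Dual F V)]

noncomputable def Fil (U : Submodule F V) (w : V) : Finset (Dual F V) :=
  univ.filter (fun f => U ≤ LinearMap.ker f ∧ f w = 1)

theorem mem_Fil {U : Submodule F V} {w : V} {f : Dual F V} :
    f ∈ Fil U w ↔ U ≤ LinearMap.ker f ∧ f w = 1 := by
  simp [Fil]

theorem exists_Fil {U : Submodule F V} {w : V} (hw : w ∉ U) : ∃ f, f ∈ Fil U w := by
  obtain ⟨f, h1, h2⟩ := Submodule.exists_le_ker_of_notMem hw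
  refine ⟨(f w)⁻¹ • f, mem_Fil.2 ⟨?_, ?_⟩⟩
  · intro u hu
    have := h2 hu
    simp_all
  · simp [h1]

theorem card_Fil {U : Submodule F V} {w : V} (hw : w ∉ U) {m : ℕ}
    (hm : finrank F V = finrank F U + 1 + m) : (Fil U w).card = Fintype.card F ^ m := by
  obtain ⟨f0, h0⟩ := exists_Fil hw
  rw [mem_Fil] at h0
  have h1 : Fintype.card F ^ m
      = (vec (U ⊔ Submodule.span F {w}).dualAnnihilator).card := by
    rw [card_vec]
    have := Subspace.finrank_add_finrank_dualAnnihilator_eq (U ⊔ Submodule.span F {w})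
    rw [finrank_sup_span hw] at this
    congr 1; omega
  rw [h1]
  apply Finset.card_bij' (fun f _ => f - f0) (fun f _ => f + f0)
  · intro f hf
    rw [mem_Fil] at hf
    rw [mem_vec, Submodule.mem_dualAnnihilator]
    intro u hu
    obtain ⟨a, ha, b, hb, rfl⟩ := Submodule.mem_sup.1 hu
    obtain ⟨c, rfl⟩ := Submodule.mem_span_singleton.1 hb
    have := hf.1 ha
    have := h0.1 ha
    simp_all
  · intro f hf
    rw [mem_vec, Submodule.mem_dualAnnihilator] at hf
    rw [mem_Fil]
    constructor
    · intro u hu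
      have := hf u (Submodule.mem_sup_left hu)
      have := h0.1 hu
      simp_all
    · have := hf w (Submodule.mem_sup_right (Submodule.mem_span_singleton_self w))
      simp_all
  · intros; simp
  · intros; simp

/-- intersection lemma -/
theorem inter_Fil {U : Submodule F V} {w z : V} (hw : w ∉ U) (h : ∀ f ∈ Fil U w, f z = 0) :
    z ∈ U := by
  by_contra hz
  obtain ⟨f0, h0⟩ := exists_Fil hw
  obtain ⟨f1, h1⟩ := exists_Fil hz
  rw [mem_Fil] at h0 h1
  have hz0 := h f0 (mem_Fil.2 h0)
  by_cases hc : f1 w = 0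
  · have := h (f0 + f1) (mem_Fil.2 ⟨?_, ?_⟩)
    · simp_all
    · intro u hu
      have := h0.1 hu
      have := h1.1 hu
      simp_all
    · simp_all
  · have := h ((f1 w)⁻¹ • f1) (mem_Fil.2 ⟨?_, ?_⟩)
    · simp_all
    · intro u hu
      have := h1.1 hu
      simp_all
    · simp_all

end basic

section ctx
variable {F V : Type} [Field F] [Fintype F] [AddCommGroup V] [Module F V] [Fintype V]

noncomputable def ee (L : Finset (Submodule F V)) (N : ℤ) (f : Dual F V) : ℤ := nf L f - N

/-- the running assumptions in the induction step -/
structure Ctx (L : Finset (Submodule F V)) (q s : ℕ) (N g y : ℤ) : Prop where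
  cq : Fintype.card F = q
  hq : 2 ≤ q
  hs : 2 ≤ s
  rk : finrank F V = 2 * s + 1
  hN : N * ((q : ℤ) ^ 2 - 1) = (q : ℤ) ^ (2 * s) - 1
  hg : ((q : ℤ) - 1) * g = (q : ℤ) ^ s - 1
  hy : y = L.card - (q : ℤ) ^ 2 * N
  lines : ∀ l ∈ L, finrank F l = 2
  hyg : y ≤ q * g
  unc : ∀ f : Dual F V, f ≠ 0 → ∀ v, v ≠ 0 → f v = 0 →
    (∀ l ∈ L, v ∈ l → ¬ l ≤ LinearMap.ker f) → g - 1 ≤ ee L N f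

variable {L : Finset (Submodule F V)} {q s : ℕ} {N g y : ℤ}

theorem Ctx.SS_top (c : Ctx L q s N g y) :
    SS L ⊤ = ((q : ℤ) - 1) * ((q + 1) * y - q) := by
  rw [SS_eq]
  have : ∀ l ∈ L, (((vec (l ⊓ ⊤)).card : ℤ) - 1) = (q : ℤ) ^ 2 - 1 := by
    intro l hl
    rw [inf_top_eq, card_vec, c.lines l hl, c.cq]; push_cast; rfl
  rw [Finset.sum_congr rfl this, Finset.sum_const, nsmul_eq_mul, finrank_top, c.rk, c.cq]
  have h1 := c.hN
  have h2 := c.hy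
  have h3 : (L.card : ℤ) = y + (q : ℤ) ^ 2 * N := by linarith
  rw [h3]
  have : (q : ℤ) ^ (2 * s + 1) = q * (N * ((q : ℤ) ^ 2 - 1) + 1) := by rw [h1]; ring
  rw [this]; ring

theorem Ctx.inf_ker (c : Ctx L q s N g y) {f : Dual F V} (hf : f ≠ 0) {l : Submodule F V}
    (hl : ¬ l ≤ LinearMap.ker f) : finrank F ↥(l ⊓ LinearMap.ker f) + 1 = finrank F l := by
  have h1 := ker_ne hf c.rk
  have h2 := Submodule.finrank_sup_add_finrank_inf_eq l (LinearMap.ker f)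
  have h3 : LinearMap.ker f < l ⊔ LinearMap.ker f := by
    refine lt_of_le_of_ne le_sup_right ?_
    intro h
    apply hl
    rw [h]; exact le_sup_left
  have h4 := Submodule.finrank_lt_finrank_of_lt h3
  have h5 := Submodule.finrank_le (l ⊔ LinearMap.ker f)
  rw [c.rk] at h5
  omega

theorem Ctx.SS_ker (c : Ctx L q s N g y) {f : Dual F V} (hf : f ≠ 0) :
    SS L (LinearMap.ker f) = ((q : ℤ) - 1) * (y + q * ee L N f) := by
  rw [SS_eq]
  have : ∀ l ∈ L, (((vec (l ⊓ LinearMap.ker f)).card : ℤ) - 1)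
      = ((q : ℤ) - 1) + (if l ≤ LinearMap.ker f then ((q : ℤ) ^ 2 - q) else 0) := by
    intro l hl
    rw [card_vec, c.cq]
    split_ifs with h
    · rw [inf_eq_left.2 h, c.lines l hl]; push_cast; ring
    · have := c.inf_ker hf h
      rw [c.lines l hl] at this
      have : finrank F ↥(l ⊓ LinearMap.ker f) = 1 := by omega
      rw [this]; push_cast; ring
  rw [Finset.sum_congr rfl this, Finset.sum_add_distrib, ← Finset.sum_filter,
    Finset.sum_const, Finset.sum_const, nsmul_eq_mul, nsmul_eq_mul, ker_ne hf c.rk, c.cq]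
  have h1 := c.hN
  have h2 := c.hy
  have h3 : (L.card : ℤ) = y + (q : ℤ) ^ 2 * N := by linarith
  have h4 : ((L.filter (fun l => l ≤ LinearMap.ker f)).card : ℤ) = ee L N f + N := by
    rw [ee, nf]; ring
  rw [h3, h4]
  have : (q : ℤ) ^ (2 * s) = (N * ((q : ℤ) ^ 2 - 1) + 1) := by rw [h1]; ring
  rw [this]; ring

theorem al_le (c : Ctx L q s N g y) (v : V) : - (q : ℤ) ≤ al L v := by
  rw [al]; split_ifs
  · simp
  · rw [c.cq, rr]; omega

theorem rr_smul {v : V} {a : F} (ha : a ≠ 0) : rr L (a • v) = rr L v := by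
  unfold rr
  congr 2
  ext l
  simp [Submodule.smul_mem_iff _ ha]

theorem al_smul {v : V} {a : F} (ha : a ≠ 0) : al L (a • v) = al L v := by
  unfold al
  rw [rr_smul ha]; simp [ha]

theorem ee_smul {f : Dual F V} {a : F} (ha : a ≠ 0) : ee L N (a • f) = ee L N f := by
  unfold ee nf
  have : LinearMap.ker (a • f) = LinearMap.ker f := LinearMap.ker_smul f a ha
  rw [this]

theorem al_zero : al L 0 = 0 := by simp [al]

theorem SS_bot : SS L ⊥ = 0 := by
  have : vec (⊥ : Submodule F V) = {0} := by ext; simp [mem_vec]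
  rw [SS, this]; simp [al_zero]

theorem Ctx.SS_span (c : Ctx L q s N g y) (v : V) :
    SS L (Submodule.span F {v}) = ((q : ℤ) - 1) * al L v := by
  by_cases hv : v = 0
  · subst hv; rw [Submodule.span_zero_singleton, SS_bot, al_zero, mul_zero]
  have h0 : (0:V) ∈ vec (Submodule.span F {v}) := by simp [mem_vec]
  rw [SS, ← Finset.add_sum_erase _ _ h0, al_zero, zero_add]
  have : ∀ u ∈ (vec (Submodule.span F {v})).erase 0, al L u = al L v := by
    intro u hu
    simp only [mem_erase, mem_vec, Submodule.mem_span_singleton] at hu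
    obtain ⟨h1, a, rfl⟩ := hu
    apply al_smul
    rintro rfl
    simp at h1
  rw [Finset.sum_congr rfl this, Finset.sum_const, card_erase_of_mem h0, card_vec,
    finrank_span_singleton hv, c.cq, nsmul_eq_mul]
  have := c.hq
  rw [Nat.cast_sub (by simp; omega)]; simp

/-- vectors of the kernel are covered enough -/
theorem Ctx.e_nonneg (c : Ctx L q s N g y) {f : Dual F V} (hf : f ≠ 0) : 0 ≤ ee L N f := by
  have hq := c.hq
  have hs := c.hs
  have hg := c.hg
  have hq' : (2:ℤ) ≤ q := by exact_mod_cast hq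
  by_cases h : ∃ v, v ≠ 0 ∧ f v = 0 ∧ ∀ l ∈ L, v ∈ l → ¬ l ≤ LinearMap.ker f
  · obtain ⟨v, h1, h2, h3⟩ := h
    have h4 := c.unc f hf v h1 h2 h3
    have : (q:ℤ)^1 ≤ (q:ℤ)^s := pow_le_pow_right₀ (by linarith) (by omega)
    have : 1 ≤ g := by
      by_contra hh
      push Not at hh
      nlinarith
    linarith
  · push Not at h
    have h1 := sum_rr (L.filter (fun l => l ≤ LinearMap.ker f)) (LinearMap.ker f)
    have h2 : ∀ l ∈ L.filter (fun l => l ≤ LinearMap.ker f),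
        (((vec (l ⊓ LinearMap.ker f)).card : ℤ) - 1) = (q:ℤ)^2 - 1 := by
      intro l hl
      simp only [mem_filter] at hl
      rw [inf_eq_left.2 hl.2, card_vec, c.lines l hl.1, c.cq]; push_cast; ring
    rw [Finset.sum_congr rfl h2, Finset.sum_const, nsmul_eq_mul] at h1
    have h0 : (0:V) ∈ vec (LinearMap.ker f) := by simp [mem_vec]
    have h3 : ∑ v ∈ (vec (LinearMap.ker f)).erase 0, (1:ℤ) ≤
      ∑ v ∈ (vec (LinearMap.ker f)).erase 0, rr (L.filter (fun l => l ≤ LinearMap.ker f)) v := by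
      apply Finset.sum_le_sum
      intro v hv
      simp only [mem_erase, mem_vec, LinearMap.mem_ker] at hv
      obtain ⟨l, h4, h5, h6⟩ := h v hv.1 hv.2
      rw [rr]
      have : 0 < (filter (fun l => v ∈ l) (L.filter (fun l => l ≤ LinearMap.ker f))).card := by
        apply Finset.card_pos.2
        exact ⟨l, by simp [h4, h5, h6]⟩
      exact_mod_cast this
    rw [h1, Finset.sum_const, card_erase_of_mem h0, card_vec, ker_ne hf c.rk, c.cq,
      nsmul_eq_mul, Nat.cast_sub (Nat.one_le_pow _ _ (by omega))] at h3
    have h5 := c.hN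
    have h4 : ((L.filter (fun l => l ≤ LinearMap.ker f)).card : ℤ) = ee L N f + N := by
      rw [ee, nf]; ring
    rw [h4] at h3
    push_cast at h3
    have h6 : 0 ≤ ee L N f * ((q:ℤ)^2 - 1) := by linarith
    have h7 : 0 < ((q:ℤ)^2 - 1) := by nlinarith
    exact nonneg_of_mul_nonneg_left h6 h7

variable [Fintype (Dual F V)]

theorem SS_add (U W : Submodule F V) (h : U ≤ W) :
    SS L W = SS L U + ∑ v ∈ vec W \ vec U, al L v := by
  have : vec U ⊆ vec W := by intro v; simp only [mem_vec]; exact fun hv => h hv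
  rw [SS, SS, ← Finset.sum_sdiff this]; ring

theorem Ctx.D (c : Ctx L q s N g y) {U : Submodule F V} {w : V} {m : ℕ} (hw : w ∉ U)
    (hm : finrank F V = finrank F U + 2 + m) :
    (q : ℤ) * (q - 1) * ∑ f ∈ Fil U w, ee L N f
      = (q : ℤ) ^ m * (q * SS L U - SS L (U ⊔ Submodule.span F {w}) + (q - 1) * (y - q)) := by
  have hne : ∀ f ∈ Fil U w, f ≠ 0 := by
    rintro f hf rfl
    simp [mem_Fil] at hf
  have h1 : ∑ f ∈ Fil U w, SS L (LinearMap.ker f)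
      = ∑ f ∈ Fil U w, (((q : ℤ) - 1) * y + (q:ℤ) * (q - 1) * ee L N f) := by
    apply Finset.sum_congr rfl
    intro f hf
    rw [c.SS_ker (hne f hf)]; ring
  rw [Finset.sum_add_distrib, Finset.sum_const, ← Finset.mul_sum,
    card_Fil hw (m := m + 1) (by omega), nsmul_eq_mul, c.cq] at h1
  have h2 : ∑ f ∈ Fil U w, SS L (LinearMap.ker f)
      = ∑ v : V, al L v * ((Fil U w).filter (fun f => f v = 0)).card := by
    have : ∀ f : Dual F V, SS L (LinearMap.ker f) = ∑ v : V, if f v = 0 then al L v else 0 := by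
      intro f
      rw [← Finset.sum_filter, SS]
      apply Finset.sum_congr
      · ext; simp [mem_vec]
      · simp
    simp_rw [this]
    rw [Finset.sum_comm]
    apply Finset.sum_congr rfl
    intro v _
    rw [← Finset.sum_filter, Finset.sum_const, nsmul_eq_mul, mul_comm]
  have h3 : ∀ v : V, al L v * ((Fil U w).filter (fun f => f v = 0)).card
      = (q:ℤ)^m * al L v + (if v ∈ U then (q:ℤ)^(m+1) * al L v else 0)
        - (if v ∈ U ⊔ Submodule.span F {w} then (q:ℤ)^m * al L v else 0) := by
    intro v
    by_cases hv : v ∈ U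
    · have hv' : v ∈ U ⊔ Submodule.span F {w} := Submodule.mem_sup_left hv
      have : (Fil U w).filter (fun f => f v = 0) = Fil U w := by
        apply Finset.filter_true_of_mem
        intro f hf
        exact (mem_Fil.1 hf).1 hv
      rw [this, card_Fil hw (m := m + 1) (by omega), c.cq]
      simp [hv, hv']; ring
    · by_cases hv' : v ∈ U ⊔ Submodule.span F {w}
      · have : (Fil U w).filter (fun f => f v = 0) = ∅ := by
          apply Finset.filter_false_of_mem
          intro f hf h0
          rw [mem_Fil] at hf
          obtain ⟨a, ha, b, hb, rfl⟩ := Submodule.mem_sup.1 hv'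
          obtain ⟨t, rfl⟩ := Submodule.mem_span_singleton.1 hb
          have := hf.1 ha
          rw [LinearMap.mem_ker] at this
          simp [this, hf.2] at h0
          apply hv
          simpa [h0] using ha
        rw [this]
        simp [hv, hv']
      · have : (Fil U w).filter (fun f => f v = 0) = Fil (U ⊔ Submodule.span F {v}) w := by
          ext f
          simp only [mem_filter, mem_Fil, sup_le_iff, Submodule.span_singleton_le_iff_mem,
            LinearMap.mem_ker]
          tauto
        have hw' : w ∉ U ⊔ Submodule.span F {v} := by
          intro hh
          obtain ⟨a, ha, b, hb, hab⟩ := Submodule.mem_sup.1 hh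
          obtain ⟨t, rfl⟩ := Submodule.mem_span_singleton.1 hb
          by_cases ht : t = 0
          · subst ht
            apply hw
            rw [← hab]; simpa using ha
          · apply hv'
            have : v = -(t⁻¹ • a) + t⁻¹ • w := by
              rw [← hab]; simp [ht]
            rw [this]
            apply Submodule.add_mem_sup
            · exact U.neg_mem (U.smul_mem _ ha)
            · exact Submodule.smul_mem _ _ (Submodule.mem_span_singleton_self w)
        rw [this, card_Fil hw' (m := m) (by rw [finrank_sup_span hv]; omega), c.cq]
        simp [hv, hv']; ring
  have h4 : SS L ⊤ = ∑ v, al L v := by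
    rw [SS]; congr 1; ext; simp [mem_vec]
  have h5 : ∀ W : Submodule F V, ∀ a : ℤ, ∑ v, (if v ∈ W then a * al L v else 0) = a * SS L W := by
    intro W a
    rw [← Finset.sum_filter, SS, Finset.mul_sum]; rfl
  rw [h2, Finset.sum_congr rfl (fun v _ => h3 v), Finset.sum_sub_distrib, Finset.sum_add_distrib,
    h5, h5, ← Finset.mul_sum, ← h4, c.SS_top] at h1
  have h6 : (q : ℤ) ^ (m+1) = q * (q:ℤ)^m := by ring
  push_cast at h1
  rw [h6] at h1
  linear_combination -h1

end ctx

section stepA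
variable {F V : Type} [Field F] [Fintype F] [AddCommGroup V] [Module F V] [Fintype V]
variable [Fintype (Dual F V)]
variable {L : Finset (Submodule F V)} {q s : ℕ} {N g y : ℤ}

theorem Ctx.q2 (c : Ctx L q s N g y) : (2:ℤ) ≤ q := by exact_mod_cast c.hq

theorem Ctx.gq (c : Ctx L q s N g y) : (q:ℤ) ≤ g - 1 := by
  have hq' := c.q2
  have hg := c.hg
  have : (q:ℤ)^2 ≤ (q:ℤ)^s := pow_le_pow_right₀ (by linarith) c.hs
  by_contra hh
  push Not at hh
  nlinarith

theorem line_eq {l : Submodule F V} (hl : finrank F l = 2) {v w : V} (hv0 : v ≠ 0) (hv : v ∈ l)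
    (hw : w ∈ l) (hvw : w ∉ Submodule.span F {v}) :
    Submodule.span F {v} ⊔ Submodule.span F {w} = l := by
  apply Submodule.eq_of_le_of_finrank_eq
  · simp [Submodule.span_singleton_le_iff_mem, hv, hw]
  · rw [finrank_sup_span hvw, finrank_span_singleton hv0, hl]

theorem exists_mem_notMem {l U : Submodule F V} (h : finrank F U < finrank F l) :
    ∃ w ∈ l, w ∉ U := by
  by_contra hh
  push Not at hh
  have := Submodule.finrank_mono (show l ≤ U from hh)
  omega

theorem Ctx.sum_ge (c : Ctx L q s N g y) {U : Submodule F V} {w : V} {T : Finset (Dual F V)}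
    (hT : T ⊆ Fil U w)
    (h : ∀ f ∈ T, ∃ v, v ≠ 0 ∧ f v = 0 ∧ ∀ l ∈ L, v ∈ l → ¬ l ≤ LinearMap.ker f) :
    (T.card : ℤ) * (g - 1) ≤ ∑ f ∈ Fil U w, ee L N f := by
  have hne : ∀ f ∈ Fil U w, f ≠ 0 := by
    rintro f hf rfl
    simp [mem_Fil] at hf
  calc (T.card : ℤ) * (g - 1) = ∑ f ∈ T, (g - 1) := by rw [Finset.sum_const, nsmul_eq_mul]
    _ ≤ ∑ f ∈ T, ee L N f := by
      apply Finset.sum_le_sum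
      intro f hf
      obtain ⟨v, h1, h2, h3⟩ := h f hf
      exact c.unc f (hne f (hT hf)) v h1 h2 h3
    _ ≤ _ := by
      apply Finset.sum_le_sum_of_subset_of_nonneg hT
      intro f hf _
      exact c.e_nonneg (hne f hf)

/-- functionals of `Fil ⟨v⟩ w` whose kernel contains no line through `v` -/
noncomputable def Unc (L : Finset (Submodule F V)) (v w : V) : Finset (Dual F V) :=
  (Fil (Submodule.span F {v}) w).filter (fun f => ∀ l ∈ L, v ∈ l → ¬ l ≤ LinearMap.ker f)

theorem Ctx.sum_ge_Unc (c : Ctx L q s N g y) {v w : V} (hv : v ≠ 0) :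
    ((Unc L v w).card : ℤ) * (g - 1) ≤ ∑ f ∈ Fil (Submodule.span F {v}) w, ee L N f := by
  apply c.sum_ge
  · exact Finset.filter_subset _ _
  · intro f hf
    simp only [Unc, mem_filter, mem_Fil, Submodule.span_singleton_le_iff_mem,
      LinearMap.mem_ker] at hf
    exact ⟨v, hv, hf.1.1, hf.2⟩

theorem Unc_compl {v w : V} : Fil (Submodule.span F {v}) w ⊆ Unc L v w ∪
    ((L.filter (fun l => v ∈ l)).filter (fun l => w ∉ l)).biUnion (fun l => Fil l w) := by
  intro f hf
  by_cases h : ∀ l ∈ L, v ∈ l → ¬ l ≤ LinearMap.ker f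
  · exact Finset.mem_union_left _ (by simp only [Unc, mem_filter]; exact ⟨hf, h⟩)
  · push Not at h
    obtain ⟨l, h1, h2, h3⟩ := h
    rw [mem_Fil] at hf
    apply Finset.mem_union_right
    simp only [mem_biUnion, mem_filter, mem_Fil]
    refine ⟨l, ⟨⟨h1, h2⟩, ?_⟩, h3, hf.2⟩
    intro hw
    have := h3 hw
    simp [hf.2] at this

theorem Ctx.card_Unc (c : Ctx L q s N g y) {v w : V} (hv : v ≠ 0)
    (hw : w ∉ Submodule.span F {v}) :
    ((q:ℤ) - ((L.filter (fun l => v ∈ l)).filter (fun l => w ∉ l)).card) * (q:ℤ)^(2*s-2)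
      ≤ (Unc L v w).card := by
  have hs := c.hs
  have h1 := Finset.card_le_card (Unc_compl (L := L) (v := v) (w := w))
  have h2 := (h1.trans (Finset.card_union_le _ _)).trans
    (Nat.add_le_add_left (Finset.card_biUnion_le) _)
  rw [card_Fil hw (m := 2 * s - 1) (by rw [finrank_span_singleton hv, c.rk]; omega)] at h2
  have h3 : ∀ l ∈ (L.filter (fun l => v ∈ l)).filter (fun l => w ∉ l),
      (Fil l w).card = q ^ (2*s-2) := by
    intro l hl
    simp only [mem_filter] at hl
    rw [card_Fil hl.2 (m := 2 * s - 2) (by rw [c.lines l hl.1.1, c.rk]; omega), c.cq]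
  rw [Finset.sum_congr rfl h3, Finset.sum_const, c.cq, smul_eq_mul] at h2
  have h4 : q ^ (2*s-1) = q * q^(2*s-2) := by
    rw [← pow_succ']; congr 1; omega
  rw [h4] at h2
  zify at h2
  linarith

/-- inequality from the D-lemma at a vector -/
theorem Ctx.ineq1 (c : Ctx L q s N g y) {v w : V} (hv : v ≠ 0)
    (hw : w ∉ Submodule.span F {v}) {a : ℤ}
    (ha : a * (q:ℤ)^(2*s-2) ≤ (Unc L v w).card) :
    (q:ℤ) * (q - 1) * a * (g - 1) ≤ q * (q - 1) * al L v
      - SS L (Submodule.span F {v} ⊔ Submodule.span F {w}) + (q - 1) * (y - q) := by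
  have hs := c.hs
  have hq := c.q2
  have hg := c.gq
  have h1 := c.D hw (m := 2*s-2) (by rw [finrank_span_singleton hv, c.rk]; omega)
  have h2 := c.sum_ge_Unc (w := w) hv
  have hp : (0:ℤ) < (q:ℤ)^(2*s-2) := by positivity
  rw [c.SS_span] at h1
  have h3 : a * (q:ℤ)^(2*s-2) * (g-1) ≤ (Unc L v w).card * (g-1) :=
    mul_le_mul_of_nonneg_right ha (by linarith)
  have h4 : (q:ℤ) * (q-1) * (a * (q:ℤ)^(2*s-2) * (g-1)) ≤
      (q:ℤ) * (q-1) * (∑ f ∈ Fil (Submodule.span F {v}) w, ee L N f) :=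
    mul_le_mul_of_nonneg_left (h3.trans h2) (by nlinarith)
  rw [h1] at h4
  refine le_of_mul_le_mul_left ?_ hp
  calc _ = (q:ℤ) * (q-1) * (a * (q:ℤ)^(2*s-2) * (g-1)) := by ring
    _ ≤ _ := h4
    _ = _ := by ring

theorem SS_ge (c : Ctx L q s N g y) {U : Submodule F V} {j : ℤ} (hj : ∀ u : V, u ≠ 0 → -j ≤ al L u) :
    -(((q:ℤ)^(finrank F U) - 1) * j) ≤ SS L U := by
  have h0 : (0:V) ∈ vec U := by simp [mem_vec]
  rw [SS, ← Finset.add_sum_erase _ _ h0, al_zero, zero_add]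
  have h1 : ∑ u ∈ (vec U).erase 0, (-j) ≤ ∑ u ∈ (vec U).erase 0, al L u := by
    apply Finset.sum_le_sum
    intro u hu
    exact hj u (Finset.ne_of_mem_erase hu)
  have h2 : 1 ≤ (vec U).card := Finset.card_pos.2 ⟨0, h0⟩
  rw [Finset.sum_const, card_erase_of_mem h0, nsmul_eq_mul, Nat.cast_sub h2, card_vec, c.cq] at h1
  push_cast at h1
  linarith

theorem Ctx.A (c : Ctx L q s N g y) (v : V) : 0 ≤ al L v := by
  have hq := c.q2
  have hg := c.gq
  have hs := c.hs
  have hyg := c.hyg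
  obtain ⟨v, -, hmin⟩ := Finset.exists_min_image (univ : Finset V) (al L) ⟨v, mem_univ v⟩
  refine le_trans ?_ (hmin _ (mem_univ _))
  by_contra hneg
  push Not at hneg
  have hv : v ≠ 0 := by rintro rfl; rw [al_zero] at hneg; exact lt_irrefl _ hneg
  obtain ⟨j, hj⟩ : ∃ j, al L v = -j := ⟨- al L v, by ring⟩
  have hj0 : 1 ≤ j := by linarith
  have hr : ((L.filter (fun l => v ∈ l)).card : ℤ) = q - j := by
    have : al L v = rr L v - q := by rw [al, if_neg hv, c.cq]
    rw [rr] at this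
    linarith
  have hall : ∀ u : V, u ≠ 0 → -j ≤ al L u := by
    intro u _
    rw [← hj]; exact hmin u (mem_univ u)
  by_cases he : (L.filter (fun l => v ∈ l)).Nonempty
  · obtain ⟨x, hx⟩ := he
    have hx' := hx
    simp only [mem_filter] at hx
    obtain ⟨w, hw1, hw2⟩ := exists_mem_notMem (l := x) (U := Submodule.span F {v})
      (by rw [finrank_span_singleton hv, c.lines x hx.1]; omega)
    have hxe := line_eq (c.lines x hx.1) hv hx.2 hw1 hw2
    have hc : (((L.filter (fun l => v ∈ l)).filter (fun l => w ∉ l)).card : ℤ) ≤ q - j - 1 := by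
      have : ((L.filter (fun l => v ∈ l)).filter (fun l => w ∉ l)) ⊆
        (L.filter (fun l => v ∈ l)).erase x := by
        intro l hl
        simp only [mem_filter, mem_erase] at hl ⊢
        refine ⟨?_, hl.1⟩
        rintro rfl
        exact hl.2 hw1
      have h2 := Finset.card_le_card this
      rw [Finset.card_erase_of_mem hx'] at h2
      have h3 : 0 < (L.filter (fun l => v ∈ l)).card := Finset.card_pos.2 ⟨x, hx'⟩
      omega
    have hU : (1 + j) * (q:ℤ)^(2*s-2) ≤ (Unc L v w).card := by
      refine le_trans ?_ (c.card_Unc hv hw2)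
      apply mul_le_mul_of_nonneg_right _ (by positivity)
      linarith
    have h1 := c.ineq1 hv hw2 hU
    rw [hxe, hj] at h1
    have h2 := SS_ge c (U := x) hall
    rw [c.lines x hx.1] at h2
    have h3 : ((q:ℤ)-1) * (q * (1+j) * (g-1)) ≤ (q-1) * (j + q * (g-1)) := by nlinarith
    have h4 := le_of_mul_le_mul_left h3 (by linarith)
    have h5 : (q:ℤ) * 1 ≤ q * (g-1) := by nlinarith
    nlinarith
  · rw [Finset.not_nonempty_iff_eq_empty] at he
    have hjq : j = q := by rw [he] at hr; simp at hr; linarith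
    obtain ⟨w, hw1, hw2⟩ := exists_mem_notMem (l := (⊤ : Submodule F V)) (U := Submodule.span F {v})
      (by rw [finrank_span_singleton hv, finrank_top, c.rk]; omega)
    have hU : (q:ℤ) * (q:ℤ)^(2*s-2) ≤ (Unc L v w).card := by
      refine le_trans ?_ (c.card_Unc hv hw2)
      rw [he]; simp
    have h1 := c.ineq1 hv hw2 hU
    have h2 := SS_ge c (U := Submodule.span F {v} ⊔ Submodule.span F {w}) hall
    rw [finrank_sup_span hw2, finrank_span_singleton hv] at h2
    rw [hj] at h1
    subst hjq
    have h6 : ((q:ℤ)-1) * y ≤ (q-1) * (q * g) := mul_le_mul_of_nonneg_left hyg (by linarith)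
    have h3 : ((q:ℤ)-1) * (q * q * (g-1)) ≤ (q-1) * (q + q * (g-1)) := by
      norm_num at h2
      linarith
    have h4 := le_of_mul_le_mul_left h3 (by linarith)
    have h7 : (q:ℤ) * (q * (g-1)) ≤ q * (1 + (g-1)) := by linarith
    have h8 := le_of_mul_le_mul_left h7 (by linarith)
    nlinarith

end stepA

section stepB
variable {F V : Type} [Field F] [Fintype F] [AddCommGroup V] [Module F V] [Fintype V]
variable [Fintype (Dual F V)]
variable {L : Finset (Submodule F V)} {q s : ℕ} {N g y : ℤ}

theorem swap_notMem {U : Submodule F V} {v w : V} (hw : w ∉ U)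
    (hv' : v ∉ U ⊔ Submodule.span F {w}) : w ∉ U ⊔ Submodule.span F {v} := by
  intro hh
  obtain ⟨a, ha, b, hb, hab⟩ := Submodule.mem_sup.1 hh
  obtain ⟨t, rfl⟩ := Submodule.mem_span_singleton.1 hb
  by_cases ht : t = 0
  · subst ht
    apply hw
    rw [← hab]; simpa using ha
  · apply hv'
    have : v = -(t⁻¹ • a) + t⁻¹ • w := by
      rw [← hab]; simp [ht]
    rw [this]
    apply Submodule.add_mem_sup
    · exact U.neg_mem (U.smul_mem _ ha)
    · exact Submodule.smul_mem _ _ (Submodule.mem_span_singleton_self w)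

theorem Ctx.SS_mono (c : Ctx L q s N g y) {U W : Submodule F V} (h : U ≤ W) : SS L U ≤ SS L W := by
  rw [SS_add U W h]
  have : 0 ≤ ∑ v ∈ vec W \ vec U, al L v := Finset.sum_nonneg (fun v _ => c.A v)
  linarith

theorem Ctx.ineq2 (c : Ctx L q s N g y) {v w : V} (hv : v ≠ 0)
    (hw : w ∉ Submodule.span F {v}) {a : ℤ}
    (ha : a * (q:ℤ)^(2*s-3) ≤ (Unc L v w).card) :
    ((q:ℤ) - 1) * a * (g - 1) ≤ q * (q - 1) * al L v
      - SS L (Submodule.span F {v} ⊔ Submodule.span F {w}) + (q - 1) * (y - q) := by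
  have hs := c.hs
  have hq := c.q2
  have hg := c.gq
  have h1 := c.D hw (m := 2*s-2) (by rw [finrank_span_singleton hv, c.rk]; omega)
  have h2 := c.sum_ge_Unc (w := w) hv
  have hp : (0:ℤ) < (q:ℤ)^(2*s-2) := by positivity
  have hpp : (q:ℤ)^(2*s-2) = q * (q:ℤ)^(2*s-3) := by
    rw [← pow_succ']; congr 1; omega
  rw [c.SS_span] at h1
  have h3 : a * (q:ℤ)^(2*s-3) * (g-1) ≤ (Unc L v w).card * (g-1) :=
    mul_le_mul_of_nonneg_right ha (by linarith)
  have h4 : (q:ℤ) * (q-1) * (a * (q:ℤ)^(2*s-3) * (g-1)) ≤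
      (q:ℤ) * (q-1) * (∑ f ∈ Fil (Submodule.span F {v}) w, ee L N f) :=
    mul_le_mul_of_nonneg_left (h3.trans h2) (by nlinarith)
  rw [h1] at h4
  refine le_of_mul_le_mul_left ?_ hp
  calc _ = (q:ℤ) * (q-1) * (a * (q:ℤ)^(2*s-3) * (g-1)) := by rw [hpp]; ring
    _ ≤ _ := h4
    _ = _ := by ring

theorem line_sup_rank {v : V} (hv : v ≠ 0) {x j : Submodule F V} (hx : finrank F x = 2)
    (hj : finrank F j = 2) (hvx : v ∈ x) (hvj : v ∈ j) (hne : x ≠ j) :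
    finrank F ↥(x ⊔ j) = 3 := by
  obtain ⟨w, h1, h2⟩ := exists_mem_notMem (l := j) (U := Submodule.span F {v})
    (by rw [finrank_span_singleton hv, hj]; omega)
  have he := line_eq hj hv hvj h1 h2
  have : x ⊔ j = x ⊔ Submodule.span F {w} := by
    rw [← he, ← sup_assoc]
    congr 1
    exact sup_eq_left.2 (by simpa [Submodule.span_singleton_le_iff_mem] using hvx)
  rw [this, finrank_sup_span, hx]
  intro hw
  apply hne
  rw [← he]; exact (line_eq hx hv hvx hw h2).symm

/-- second estimate for the uncovered functionals -/
theorem Ctx.card_Unc2 (c : Ctx L q s N g y) {v w : V} (hv : v ≠ 0)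
    (hw : w ∉ Submodule.span F {v}) (hX : (L.filter (fun l => v ∈ l)).card = q)
    (hwX : ∀ x ∈ L, v ∈ x → w ∉ x) {r x1 x3 : Submodule F V} (hwr : w ∈ r)
    (h1 : x1 ∈ L) (hv1 : v ∈ x1) (h1r : x1 ≤ r) (h3 : x3 ∈ L) (hv3 : v ∈ x3) (h3r : ¬ x3 ≤ r) :
    ((q:ℤ) - 1) * (q:ℤ)^(2*s-3) ≤ (Unc L v w).card := by
  have hs := c.hs
  set X := L.filter (fun l => v ∈ l) with hXdef
  have hx1X : x1 ∈ X := by simp [hXdef, h1, hv1]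
  have hsmall : ∀ x ∈ X, ∀ j ∈ X, x ≤ r → ¬ j ≤ r →
      (Fil x w ∩ Fil j w).card = q ^ (2*s-3) := by
    intro x hx j hj hxr hjr
    simp only [hXdef, mem_filter] at hx hj
    have hne : x ≠ j := by rintro rfl; exact hjr hxr
    have hrk := line_sup_rank hv (c.lines x hx.1) (c.lines j hj.1) hx.2 hj.2 hne
    have hn : w ∉ x ⊔ j := by
      intro hh
      have hwx := hwX x hx.1 hx.2
      have : x ⊔ Submodule.span F {w} = x ⊔ j := by
        apply Submodule.eq_of_le_of_finrank_eq
        · exact sup_le le_sup_left (by simpa [Submodule.span_singleton_le_iff_mem] using hh)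
        · rw [finrank_sup_span hwx, hrk, c.lines x hx.1]
      apply hjr
      calc j ≤ x ⊔ j := le_sup_right
        _ = _ := this.symm
        _ ≤ r := sup_le hxr (by simpa [Submodule.span_singleton_le_iff_mem] using hwr)
    have : Fil x w ∩ Fil j w = Fil (x ⊔ j) w := by
      ext f; simp only [mem_inter, mem_Fil, sup_le_iff]; tauto
    rw [this, card_Fil hn (m := 2*s-3) (by rw [hrk, c.rk]; omega), c.cq]
  let jj : Submodule F V → Submodule F V := fun x => if x ≤ r then x3 else x1
  have hx3X : x3 ∈ X := by simp [hXdef, h3, hv3]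
  have hjj : ∀ x ∈ X, (Fil x w \ Fil (jj x) w).card + q ^ (2*s-3) = q ^ (2*s-2) := by
    intro x hx
    have e1 : (Fil x w).card = q ^ (2*s-2) := by
      simp only [hXdef, mem_filter] at hx
      rw [card_Fil (hwX x hx.1 hx.2) (m := 2*s-2) (by rw [c.lines x hx.1, c.rk]; omega), c.cq]
    have e2 : (Fil x w ∩ Fil (jj x) w).card = q ^ (2*s-3) := by
      by_cases hxr : x ≤ r
      · simp only [jj, if_pos hxr]
        exact hsmall x hx x3 hx3X hxr h3r
      · simp only [jj, if_neg hxr]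
        rw [Finset.inter_comm]
        exact hsmall x1 hx1X x hx h1r hxr
    have e3 := Finset.card_sdiff_add_card_inter (Fil x w) (Fil (jj x) w)
    omega
  have hsub : Fil (Submodule.span F {v}) w ⊆ Unc L v w ∪ (Fil x1 w ∪
      (X.erase x1).biUnion (fun x => Fil x w \ Fil (jj x) w)) := by
    intro f hf
    have := Unc_compl (L := L) hf
    rw [Finset.mem_union] at this
    rcases this with h | h
    · exact Finset.mem_union_left _ h
    · apply Finset.mem_union_right
      simp only [mem_biUnion, mem_filter] at h
      obtain ⟨x, ⟨⟨hxL, hvx⟩, -⟩, hfx⟩ := h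
      by_cases hf1 : f ∈ Fil x1 w
      · exact Finset.mem_union_left _ hf1
      · apply Finset.mem_union_right
        simp only [mem_biUnion, mem_erase, mem_sdiff]
        by_cases hf2 : f ∈ Fil (jj x) w
        · by_cases hxr : x ≤ r
          · simp only [jj, if_pos hxr] at hf2
            refine ⟨x3, ⟨?_, hx3X⟩, hf2, ?_⟩
            · rintro rfl; exact h3r h1r
            · simpa only [jj, if_neg h3r] using hf1
          · simp only [jj, if_neg hxr] at hf2
            exact absurd hf2 hf1
        · refine ⟨x, ⟨?_, by simp [hXdef, hxL, hvx]⟩, hfx, hf2⟩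
          rintro rfl; exact hf1 hfx
  have hc := Finset.card_le_card hsub
  have hc2 := (hc.trans (Finset.card_union_le _ _)).trans
    (Nat.add_le_add_left ((Finset.card_union_le _ _).trans
      (Nat.add_le_add_left Finset.card_biUnion_le _)) _)
  have hb : ∑ x ∈ X.erase x1, (Fil x w \ Fil (jj x) w).card =
      ∑ x ∈ X.erase x1, (q^(2*s-2) - q^(2*s-3)) := by
    apply Finset.sum_congr rfl
    intro x hx
    have := hjj x (Finset.mem_of_mem_erase hx)
    omega
  have hle : q^(2*s-3) ≤ q^(2*s-2) := Nat.pow_le_pow_right (by have := c.hq; omega) (by omega)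
  rw [hb, Finset.sum_const, Finset.card_erase_of_mem hx1X, hX, smul_eq_mul,
    card_Fil hw (m := 2 * s - 1) (by rw [finrank_span_singleton hv, c.rk]; omega), c.cq,
    card_Fil (hwX x1 h1 hv1) (m := 2*s-2) (by rw [c.lines x1 h1, c.rk]; omega), c.cq] at hc2
  have hq1 : 1 ≤ q := by have := c.hq; omega
  zify [hle, hq1] at hc2
  have e1 : (q:ℤ)^(2*s-1) = q * q * (q:ℤ)^(2*s-3) := by
    rw [mul_assoc, ← pow_succ', ← pow_succ']; congr 1; omega
  have e2 : (q:ℤ)^(2*s-2) = q * (q:ℤ)^(2*s-3) := by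
    rw [← pow_succ']; congr 1; omega
  rw [e1, e2] at hc2
  linarith

def zz (v w c : V) (t : F) : Submodule F V :=
  Submodule.span F {v} ⊔ Submodule.span F {c - t • w}

structure Cfg (L : Finset (Submodule F V)) (v w c : V) : Prop where
  hv : v ≠ 0
  hw : w ∉ Submodule.span F {v}
  hc : c ∉ Submodule.span F {v} ⊔ Submodule.span F {w}
  x1 : Submodule.span F {v} ⊔ Submodule.span F {w} ∈ L
  x2 : Submodule.span F {v} ⊔ Submodule.span F {c} ∈ L

variable {v w c : V}

theorem Cfg.fn (k : Cfg L v w c) : ∃ f1 f2 : Dual F V, f1 v = 0 ∧ f1 w = 1 ∧ f1 c = 0 ∧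
    f2 v = 0 ∧ f2 w = 0 ∧ f2 c = 1 := by
  obtain ⟨f2, h2⟩ := exists_Fil k.hc
  obtain ⟨f1, h1⟩ := exists_Fil k.hw
  simp only [mem_Fil, sup_le_iff, Submodule.span_singleton_le_iff_mem, LinearMap.mem_ker] at h1 h2
  refine ⟨f1 - f1 c • f2, f2, ?_⟩
  simp [h1, h2]

theorem mem_zz {v w c : V} {t : F} {u : V} :
    u ∈ zz v w c t ↔ ∃ a b : F, u = a • v + b • (c - t • w) := by
  rw [zz, Submodule.mem_sup]
  constructor
  · rintro ⟨a, ha, b, hb, rfl⟩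
    obtain ⟨a, rfl⟩ := Submodule.mem_span_singleton.1 ha
    obtain ⟨b, rfl⟩ := Submodule.mem_span_singleton.1 hb
    exact ⟨a, b, rfl⟩
  · rintro ⟨a, b, rfl⟩
    exact ⟨_, Submodule.smul_mem _ _ (Submodule.mem_span_singleton_self _), _,
      Submodule.smul_mem _ _ (Submodule.mem_span_singleton_self _), rfl⟩

theorem Cfg.w_zz (k : Cfg L v w c) (t : F) : w ∉ zz v w c t := by
  obtain ⟨f1, f2, h1, h2, h3, h4, h5, h6⟩ := k.fn
  rw [mem_zz]
  rintro ⟨a, b, hab⟩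
  have e1 := congrArg f1 hab
  have e2 := congrArg f2 hab
  simp [h1, h2, h3, h4, h5, h6] at e1 e2
  simp [← e2] at e1

theorem Cfg.c_t (k : Cfg L v w c) (t : F) : c - t • w ∉ Submodule.span F {v} := by
  obtain ⟨f1, f2, h1, h2, h3, h4, h5, h6⟩ := k.fn
  rw [Submodule.mem_span_singleton]
  rintro ⟨a, hab⟩
  have e2 := congrArg f2 hab
  simp [h4, h5, h6] at e2

theorem Cfg.zz_rank (k : Cfg L v w c) (t : F) : finrank F (zz v w c t) = 2 := by
  rw [zz, finrank_sup_span (k.c_t t), finrank_span_singleton k.hv]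

theorem Cfg.zz_disj (k : Cfg L v w c) {t t' : F} (h : t ≠ t') {u : V} (hu : u ∈ zz v w c t)
    (hu' : u ∈ zz v w c t') : u ∈ Submodule.span F {v} := by
  obtain ⟨f1, f2, h1, h2, h3, h4, h5, h6⟩ := k.fn
  rw [mem_zz] at hu hu'
  obtain ⟨a, b, rfl⟩ := hu
  obtain ⟨a', b', hab⟩ := hu'
  have e1 := congrArg f1 hab
  have e2 := congrArg f2 hab
  simp [h1, h2, h3, h4, h5, h6] at e1 e2
  subst e2
  have : b = 0 := by
    by_contra hb
    exact h (mul_left_cancel₀ hb e1)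
  subst this
  rw [Submodule.mem_span_singleton]
  exact ⟨a, by simp⟩

theorem Cfg.zz_inj (k : Cfg L v w c) : Function.Injective (zz (F := F) v w c) := by
  intro t t' h
  by_contra hne
  have hm : c - t • w ∈ zz v w c t := mem_zz.2 ⟨0, 1, by simp⟩
  have := k.zz_disj hne hm (h ▸ hm)
  exact k.c_t t this

def rho (v w c : V) : Submodule F V :=
  (Submodule.span F {v} ⊔ Submodule.span F {w}) ⊔ Submodule.span F {c}

theorem zz_sup {t : F} : zz v w c t ⊔ Submodule.span F {w} = rho (F := F) v w c := by
  rw [zz, rho]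
  apply le_antisymm
  · apply sup_le
    · apply sup_le
      · exact le_sup_left.trans le_sup_left
      · rw [Submodule.span_singleton_le_iff_mem]
        apply Submodule.sub_mem
        · exact Submodule.mem_sup_right (Submodule.mem_span_singleton_self _)
        · exact Submodule.smul_mem _ _ (Submodule.mem_sup_left (Submodule.mem_sup_right
            (Submodule.mem_span_singleton_self _)))
    · exact le_sup_right.trans le_sup_left
  · apply sup_le
    · exact sup_le (le_sup_left.trans le_sup_left) le_sup_right
    · rw [Submodule.span_singleton_le_iff_mem]
      have : c = (c - t • w) + t • w := by simp
      rw [this]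
      apply Submodule.add_mem_sup
      · exact Submodule.mem_sup_right (by rw [← this]; exact Submodule.mem_span_singleton_self _)
      · exact Submodule.smul_mem _ _ (Submodule.mem_span_singleton_self _)

theorem Cfg.classify (k : Cfg L v w c) {x : Submodule F V} (hx : finrank F x = 2) (hv : v ∈ x)
    (hxr : x ≤ rho v w c) :
    x = Submodule.span F {v} ⊔ Submodule.span F {w} ∨ ∃ t, x = zz v w c t := by
  obtain ⟨u, h1, h2⟩ := exists_mem_notMem (l := x) (U := Submodule.span F {v})
    (by rw [finrank_span_singleton k.hv, hx]; omega)
  have hu := hxr h1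
  rw [← zz_sup (t := 0)] at hu
  obtain ⟨a, ha, b, hb, hab⟩ := Submodule.mem_sup.1 hu
  obtain ⟨b, rfl⟩ := Submodule.mem_span_singleton.1 hb
  obtain ⟨a, d, rfl⟩ := mem_zz.1 ha
  by_cases hd : d = 0
  · left
    subst hd
    have hb0 : b ≠ 0 := by
      rintro rfl
      apply h2
      rw [← hab]
      simp [Submodule.mem_span_singleton]
    refine (line_eq hx k.hv hv ?_ k.hw).symm
    have : w = b⁻¹ • (u - a • v) := by
      rw [← hab]; simp [hb0]
    rw [this]
    exact x.smul_mem _ (x.sub_mem h1 (x.smul_mem _ hv))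
  · right
    refine ⟨-(d⁻¹ * b), (line_eq hx k.hv hv ?_ (k.c_t _)).symm⟩
    have : c - (-(d⁻¹ * b)) • w = d⁻¹ • (u - a • v) := by
      rw [← hab, show a • v + d • (c - (0:F) • w) + b • w - a • v = d • c + b • w by
        rw [zero_smul, sub_zero]; abel, smul_add, smul_smul, smul_smul, inv_mul_cancel₀ hd]
      simp
    rw [this]
    exact x.smul_mem _ (x.sub_mem h1 (x.smul_mem _ hv))

end stepB

section stepB2
variable {F V : Type} [Field F] [Fintype F] [AddCommGroup V] [Module F V] [Fintype V]
variable [Fintype (Dual F V)]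
variable {L : Finset (Submodule F V)} {q s : ℕ} {N g y : ℤ} {v w c : V}

noncomputable def Good (L : Finset (Submodule F V)) (v w c : V) : Finset F :=
  univ.filter (fun t => zz v w c t ∉ L)

theorem Cfg.ineqB (k : Cfg L v w c) (h : Ctx L q s N g y)
    (hX : (L.filter (fun l => v ∈ l)).card = q) :
    (q:ℤ)^2 * (q - 1) * (g - 1) ≤ ∑ t ∈ Good L v w c,
      (q * SS L (zz v w c t) - SS L (rho v w c) + (q - 1) * (y - q)) := by
  have hq := h.q2
  have hg := h.gq
  have hs := h.hs
  have hU : 1 * (q:ℤ)^(2*s-2) ≤ (Unc L v w).card := by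
    refine le_trans ?_ (h.card_Unc k.hv k.hw)
    apply mul_le_mul_of_nonneg_right _ (by positivity)
    have hm : Submodule.span F {v} ⊔ Submodule.span F {w} ∈ L.filter (fun l => v ∈ l) := by
      simp only [mem_filter]
      exact ⟨k.x1, Submodule.mem_sup_left (Submodule.mem_span_singleton_self _)⟩
    have : ((L.filter (fun l => v ∈ l)).filter (fun l => w ∉ l)) ⊆
        (L.filter (fun l => v ∈ l)).erase (Submodule.span F {v} ⊔ Submodule.span F {w}) := by
      intro l hl
      simp only [mem_filter, mem_erase] at hl ⊢
      refine ⟨?_, hl.1⟩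
      rintro rfl
      exact hl.2 (Submodule.mem_sup_right (Submodule.mem_span_singleton_self _))
    have h2 := Finset.card_le_card this
    rw [Finset.card_erase_of_mem hm, hX] at h2
    have := h.hq
    omega
  have hmap : ∀ f ∈ Unc L v w, f c ∈ Good L v w c ∧ f ∈ Fil (zz v w c (f c)) w := by
    intro f hf
    simp only [Unc, mem_filter, mem_Fil, Submodule.span_singleton_le_iff_mem,
      LinearMap.mem_ker] at hf
    have hz : zz v w c (f c) ≤ LinearMap.ker f := by
      rw [zz]
      simp [Submodule.span_singleton_le_iff_mem, hf.1]
    constructor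
    · simp only [Good, mem_filter, mem_univ, true_and]
      intro hL
      exact hf.2 _ hL (Submodule.mem_sup_left (Submodule.mem_span_singleton_self _)) hz
    · exact mem_Fil.2 ⟨hz, hf.1.2⟩
  have hne : ∀ U : Submodule F V, ∀ f ∈ Fil U w, f ≠ 0 := by
    rintro U f hf rfl
    simp [mem_Fil] at hf
  have h1 : ((Unc L v w).card : ℤ) * (g - 1) ≤ ∑ f ∈ Unc L v w, ee L N f := by
    rw [← nsmul_eq_mul, ← Finset.sum_const]
    apply Finset.sum_le_sum
    intro f hf
    have hf' := hf
    simp only [Unc, mem_filter, mem_Fil, Submodule.span_singleton_le_iff_mem,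
      LinearMap.mem_ker] at hf
    exact h.unc f (hne _ f (hmap f hf').2) v k.hv hf.1.1 hf.2
  have h2 : ∑ f ∈ Unc L v w, ee L N f ≤ ∑ t ∈ Good L v w c, ∑ f ∈ Fil (zz v w c t) w, ee L N f := by
    rw [← Finset.sum_fiberwise_of_maps_to (fun f hf => (hmap f hf).1)]
    apply Finset.sum_le_sum
    intro t ht
    apply Finset.sum_le_sum_of_subset_of_nonneg
    · intro f hf
      simp only [mem_filter] at hf
      rw [← hf.2]; exact (hmap f hf.1).2
    · intro f hf _
      exact h.e_nonneg (hne _ f hf)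
  have h3 : ∀ t ∈ Good L v w c, (q:ℤ) * (q-1) * ∑ f ∈ Fil (zz v w c t) w, ee L N f
      = (q:ℤ)^(2*s-3) * (q * SS L (zz v w c t) - SS L (rho v w c) + (q - 1) * (y - q)) := by
    intro t _
    rw [h.D (k.w_zz t) (m := 2*s-3) (by rw [k.zz_rank, h.rk]; omega), zz_sup]
  have h4 := Finset.sum_congr rfl h3
  rw [← Finset.mul_sum, ← Finset.mul_sum] at h4
  have hp : (0:ℤ) < (q:ℤ)^(2*s-3) := by positivity
  have e2 : (q:ℤ)^(2*s-2) = q * (q:ℤ)^(2*s-3) := by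
    rw [← pow_succ']; congr 1; omega
  rw [e2] at hU
  refine le_of_mul_le_mul_left ?_ hp
  rw [← h4]
  have h5 : 1 * (q * (q:ℤ)^(2*s-3)) * (g-1) ≤ (Unc L v w).card * (g-1) :=
    mul_le_mul_of_nonneg_right hU (by linarith)
  calc _ = (q:ℤ) * (q-1) * (1 * (q * (q:ℤ)^(2*s-3)) * (g-1)) := by ring
    _ ≤ _ := mul_le_mul_of_nonneg_left (h5.trans (h1.trans h2)) (by nlinarith)

theorem Cfg.zz_le (t : F) : zz v w c t ≤ rho v w c := by
  rw [← zz_sup (t := t)]; exact le_sup_left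

theorem Cfg.sum_le (k : Cfg L v w c) (h : Ctx L q s N g y) (hv0 : al L v = 0) (T : Finset F) :
    ∑ t ∈ T, SS L (zz v w c t) ≤ SS L (rho v w c) := by
  have h1 : ∀ t ∈ T, SS L (zz v w c t) = ∑ u ∈ vec (zz v w c t) \ vec (Submodule.span F {v}), al L u := by
    intro t _
    rw [SS_add (Submodule.span F {v}) (zz v w c t) le_sup_left, h.SS_span, hv0]; ring
  rw [Finset.sum_congr rfl h1, ← Finset.sum_biUnion, SS]
  · apply Finset.sum_le_sum_of_subset_of_nonneg
    · intro u hu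
      simp only [mem_biUnion, mem_sdiff, mem_vec] at hu ⊢
      obtain ⟨t, _, hu, _⟩ := hu
      exact Cfg.zz_le t hu
    · intro u _ _
      exact h.A u
  · intro t _ t' _ hne
    simp only [Function.onFun]
    rw [Finset.disjoint_left]
    intro u hu hu'
    simp only [mem_sdiff, mem_vec] at hu hu'
    exact hu.2 (k.zz_disj hne hu.1 hu'.1)

/-- structure of a poor vector -/
structure PS (L : Finset (Submodule F V)) (q : ℕ) (N y : ℤ) (v : V) (l0 : Submodule F V)
    (w : V) : Prop where
  r2 : finrank F l0 = 2
  vl : v ∈ l0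
  wl : w ∉ l0
  cov : ∀ x ∈ L, v ∈ x → x ≤ l0 ⊔ Submodule.span F {w}
  nL : l0 ∉ L
  sl : SS L l0 = ((q:ℤ) - 1) * (y - q)
  az : ∀ u ∈ l0 ⊔ Submodule.span F {w}, u ∉ l0 → al L u = 0
  ez : ∀ f : Dual F V, f v = 0 → ¬ l0 ≤ LinearMap.ker f → ee L N f = 0

theorem Cfg.B (k : Cfg L v w c) (h : Ctx L q s N g y) (hv0 : al L v = 0)
    (hX : (L.filter (fun l => v ∈ l)).card = q) :
    y = q * g ∧ ∃ l0 w, PS L q N y v l0 w := by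
  have hq := h.q2
  have hg := h.gq
  have hs := h.hs
  have hyg := h.hyg
  have hB := k.ineqB h hX
  set X := L.filter (fun l => v ∈ l) with hXdef
  set x1 := Submodule.span F {v} ⊔ Submodule.span F {w} with hx1
  have hvx1 : v ∈ x1 := Submodule.mem_sup_left (Submodule.mem_span_singleton_self _)
  have hvz : ∀ t : F, v ∈ zz v w c t := fun t =>
    Submodule.mem_sup_left (Submodule.mem_span_singleton_self _)
  have hsum := k.sum_le h hv0 (Good L v w c)
  -- the set of lines of X inside rho
  set Y : Finset (Submodule F V) := insert x1 ((univ \ Good L v w c).image (zz v w c)) with hY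
  have hYX : Y ⊆ X := by
    intro x hx
    simp only [hY, mem_insert, mem_image, mem_sdiff, mem_univ, true_and, Good, mem_filter,
      not_not] at hx
    simp only [hXdef, mem_filter]
    rcases hx with rfl | ⟨t, ht, rfl⟩
    · exact ⟨k.x1, hvx1⟩
    · exact ⟨ht, hvz t⟩
  have hYr : ∀ x ∈ Y, x ≤ rho v w c := by
    intro x hx
    simp only [hY, mem_insert, mem_image] at hx
    rcases hx with rfl | ⟨t, ht, rfl⟩
    · exact le_sup_left
    · exact Cfg.zz_le t
  have hXY : ∀ x ∈ X, x ≤ rho v w c → x ∈ Y := by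
    intro x hx hxr
    simp only [hXdef, mem_filter] at hx
    simp only [hY, mem_insert, mem_image, mem_sdiff, mem_univ, true_and, Good, mem_filter,
      not_not]
    rcases k.classify (h.lines x hx.1) hx.2 hxr with e | ⟨t, rfl⟩
    · exact Or.inl e
    · exact Or.inr ⟨t, hx.1, rfl⟩
  have hYc : Y.card + (Good L v w c).card = q + 1 := by
    rw [hY, Finset.card_insert_of_notMem, Finset.card_image_of_injective _ k.zz_inj,
      Finset.card_sdiff_of_subset (Finset.subset_univ _), Finset.card_univ, h.cq]
    · have := Finset.card_le_univ (Good L v w c)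
      rw [h.cq] at this
      omega
    · simp only [mem_image, not_exists, not_and]
      rintro t _ e
      apply k.w_zz t
      rw [e]; exact Submodule.mem_sup_right (Submodule.mem_span_singleton_self _)
  have hgood : ∀ t ∈ Good L v w c, ∀ x ∈ L, v ∈ x → c - t • w ∉ x := by
    intro t ht x hx hvx hcx
    simp only [Good, mem_filter, mem_univ, true_and] at ht
    apply ht
    rw [zz, line_eq (h.lines x hx) k.hv hvx hcx (k.c_t t)]; exact hx
  have h0 : (0:F) ∉ Good L v w c := by
    intro hh
    apply (Finset.mem_filter.1 hh).2
    rw [zz]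
    simpa using k.x2
  have hκ : (Good L v w c).card + 1 ≤ q := by
    have := Finset.card_le_univ (insert (0:F) (Good L v w c))
    rwa [Finset.card_insert_of_notMem h0, h.cq] at this
  by_cases h1 : (Good L v w c).card = 1
  · obtain ⟨t, ht⟩ := Finset.card_eq_one.1 h1
    have htg : t ∈ Good L v w c := by rw [ht]; simp
    rw [ht, Finset.sum_singleton] at hB hsum
    have hXeq : Y = X := Finset.eq_of_subset_of_card_le hYX (by omega)
    have hD := h.D (k.c_t t) (m := 2*s-2)
      (by rw [finrank_span_singleton k.hv, h.rk]; omega)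
    have hi := h.ineq2 k.hv (k.c_t t) (a := 0) (by simp)
    change _ ≤ _ - SS L (zz v w c t) + _ at hi
    rw [hv0] at hi
    rw [h.SS_span, hv0] at hD
    change _ = _ * (_ - SS L (zz v w c t) + _) at hD
    set z := SS L (zz v w c t) with hz
    set R := SS L (rho v w c) with hR
    have hq1 : (0:ℤ) < q - 1 := by linarith
    have hb1 : z ≤ (q - 1) * (y - q) := by linarith
    have hb2 : ((q:ℤ) - 1) * (y - q) ≤ (q - 1) * (q * (g-1)) :=
      mul_le_mul_of_nonneg_left (by linarith) hq1.le
    have hb3 : ((q:ℤ) - 1) * ((q - 1) * (q * (g-1))) ≤ (q-1) * z := by nlinarith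
    have hb4 := le_of_mul_le_mul_left hb3 hq1
    have hy : y = q * g := by
      have := le_of_mul_le_mul_left (show ((q:ℤ) - 1) * (q * (g-1)) ≤ (q - 1) * (y - q) by linarith) hq1
      linarith
    have hzz : z = (q - 1) * (y - q) := by rw [hy]; rw [hy] at hb1; linarith
    have hRz : R = z := by
      apply le_antisymm _ hsum
      rw [hzz, hy]
      rw [hzz, hy] at hB
      linarith
    refine ⟨hy, zz v w c t, w, k.zz_rank t, hvz t, k.w_zz t, ?_, ?_, hzz, ?_, ?_⟩
    · intro x hx hvx
      rw [zz_sup]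
      exact hYr x (by rw [hXeq]; simp [hXdef, hx, hvx])
    · simpa [Good] using htg
    · rw [zz_sup]
      intro u hu hu'
      rw [hR, hz, SS_add _ _ (Cfg.zz_le t)] at hRz
      have : ∑ v_1 ∈ vec (rho (F := F) v w c) \ vec (zz v w c t), al L v_1 = 0 := by linarith
      rw [Finset.sum_eq_zero_iff_of_nonneg (fun u _ => h.A u)] at this
      exact this u (by simp [mem_vec, hu, hu'])
    · intro f hfv hfl
      have hfc : f (c - t • w) ≠ 0 := by
        intro h0
        apply hfl
        rw [zz]
        simp only [sup_le_iff, Submodule.span_singleton_le_iff_mem, LinearMap.mem_ker]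
        exact ⟨hfv, h0⟩
      have hs0 : ∑ f ∈ Fil (Submodule.span F {v}) (c - t • w), ee L N f = 0 := by
        have : (q:ℤ) * (q-1) * ∑ f ∈ Fil (Submodule.span F {v}) (c - t • w), ee L N f = 0 := by
          rw [hD, hzz]; ring
        rcases mul_eq_zero.1 this with e | e
        · exfalso; nlinarith
        · exact e
      rw [Finset.sum_eq_zero_iff_of_nonneg] at hs0
      · rw [← ee_smul (inv_ne_zero hfc)]
        apply hs0
        rw [mem_Fil, Submodule.span_singleton_le_iff_mem]
        constructor
        · simp [hfv]
        · rw [LinearMap.smul_apply, smul_eq_mul, inv_mul_cancel₀ hfc]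
      · intro f hf
        apply h.e_nonneg
        rintro rfl
        simp [mem_Fil] at hf
  · exfalso
    have hbd : ∀ t ∈ Good L v w c, SS L (zz v w c t) ≤ (q-1) * (g-1) := by
      intro t ht
      have : 0 < (Good L v w c).card := Finset.card_pos.2 ⟨t, ht⟩
      obtain ⟨x3, hx3, hx3Y⟩ : ∃ x ∈ X, x ∉ Y := by
        by_contra hh
        push Not at hh
        have := Finset.card_le_card (show X ⊆ Y from hh)
        omega
      have hx3r : ¬ x3 ≤ rho v w c := fun hh => hx3Y (hXY x3 hx3 hh)
      simp only [hXdef, mem_filter] at hx3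
      have hc2 := h.card_Unc2 k.hv (k.c_t t) hX (hgood t ht) (r := rho v w c)
        (Cfg.zz_le t (mem_zz.2 ⟨0, 1, by simp⟩)) k.x1 hvx1 le_sup_left hx3.1 hx3.2 hx3r
      have hi := h.ineq2 k.hv (k.c_t t) hc2
      change _ ≤ _ - SS L (zz v w c t) + _ at hi
      rw [hv0] at hi
      have hb2 : ((q:ℤ) - 1) * (y - q) ≤ (q - 1) * (q * (g-1)) :=
        mul_le_mul_of_nonneg_left (by linarith) (by linarith)
      nlinarith
    have hσ := Finset.sum_le_sum hbd
    rw [Finset.sum_const, nsmul_eq_mul] at hσ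
    rw [Finset.sum_add_distrib, Finset.sum_sub_distrib, ← Finset.mul_sum, Finset.sum_const,
      Finset.sum_const, nsmul_eq_mul, nsmul_eq_mul] at hB
    set σ := ∑ t ∈ Good L v w c, SS L (zz v w c t) with hσd
    obtain ⟨κ, hk⟩ : ∃ κ : ℤ, κ = ((Good L v w c).card : ℤ) := ⟨_, rfl⟩
    rw [← hk] at hB hσ
    have hk0 : 0 ≤ κ := by rw [hk]; positivity
    have hk1 : κ + 1 ≤ q := by rw [hk]; exact_mod_cast hκ
    have e1 : κ * σ ≤ κ * SS L (rho v w c) := mul_le_mul_of_nonneg_left hsum hk0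
    have e2 : (q - κ) * σ ≤ (q - κ) * (κ * ((q-1) * (g-1))) :=
      mul_le_mul_of_nonneg_left hσ (by linarith)
    have hb2 : κ * (((q:ℤ) - 1) * (y - q)) ≤ κ * ((q - 1) * (q * (g-1))) :=
      mul_le_mul_of_nonneg_left (mul_le_mul_of_nonneg_left (by linarith) (by linarith)) hk0
    have e3 : (((q:ℤ)-1) * (g-1)) * (q^2) ≤ (((q:ℤ)-1) * (g-1)) * (κ * (2 * q - κ)) := by
      linarith
    have e4 : 0 < ((q:ℤ)-1) * (g-1) := mul_pos (by linarith) (by linarith)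
    have e5 := le_of_mul_le_mul_left e3 e4
    nlinarith

theorem Ctx.B (h : Ctx L q s N g y) {v : V} (hv : v ≠ 0) (hv0 : al L v = 0) :
    y = q * g ∧ ∃ l0 w, PS L q N y v l0 w := by
  have hX : (L.filter (fun l => v ∈ l)).card = q := by
    rw [al, if_neg hv, rr, h.cq] at hv0
    omega
  have hq := h.hq
  obtain ⟨x1, h1, x2, h2, hne⟩ := Finset.one_lt_card.1
    (show 1 < (L.filter (fun l => v ∈ l)).card by omega)
  simp only [mem_filter] at h1 h2
  obtain ⟨w, hw, hw'⟩ := exists_mem_notMem (l := x1) (U := Submodule.span F {v})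
    (by rw [finrank_span_singleton hv, h.lines x1 h1.1]; omega)
  obtain ⟨c, hc, hc'⟩ := exists_mem_notMem (l := x2) (U := Submodule.span F {v})
    (by rw [finrank_span_singleton hv, h.lines x2 h2.1]; omega)
  have e1 := line_eq (h.lines x1 h1.1) hv h1.2 hw hw'
  have e2 := line_eq (h.lines x2 h2.1) hv h2.2 hc hc'
  refine Cfg.B (w := w) (c := c) ⟨hv, hw', ?_, ?_, ?_⟩ h hv0 hX
  · rw [e1]
    intro hh
    apply hne
    rw [← e2, line_eq (h.lines x1 h1.1) hv h1.2 hh hc']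
  · rw [e1]; exact h1.1
  · rw [e2]; exact h2.1

end stepB2

section stepD
variable {F V : Type} [Field F] [Fintype F] [AddCommGroup V] [Module F V] [Fintype V]
variable [Fintype (Dual F V)]
variable {L : Finset (Submodule F V)} {q s : ℕ} {N g y : ℤ}

theorem Ctx.C (h : Ctx L q s N g y) : ∃ v : V, v ≠ 0 ∧ al L v = 0 := by
  by_contra hh
  push Not at hh
  have hq := h.q2
  have hs := h.hs
  have hg := h.hg
  have h1 := SS_ge h (U := (⊤ : Submodule F V)) (j := -1) (by
    intro u hu
    have := h.A u
    have := hh u hu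
    omega)
  rw [h.SS_top, finrank_top, h.rk] at h1
  have hyg := h.hyg
  have h2 : ((q:ℤ) - 1) * (q+1) * y ≤ (q-1) * (q+1) * (q * g) :=
    mul_le_mul_of_nonneg_left hyg (by nlinarith)
  have h3 : (q:ℤ)^(s+3) ≤ (q:ℤ)^(2*s+1) := pow_le_pow_right₀ (by linarith) (by omega)
  have h4 : (q:ℤ)^(s+3) = q^3 * (q:ℤ)^s := by ring
  have h5 : (0:ℤ) < (q:ℤ)^s := by positivity
  have h6 : ((q:ℤ) - 1) * (q+1) * (q * g) = q * (q+1) * (q^s - 1) := by rw [← hg]; ring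
  have h7 : (q:ℤ)^2 + q ≤ q^3 := by nlinarith
  have h8 : ((q:ℤ)^2+q) * q^s ≤ q^3 * q^s := mul_le_mul_of_nonneg_right h7 h5.le
  nlinarith

theorem PS.E4 {v w : V} {l0 : Submodule F V} (p : PS L q N y v l0 w) (h : Ctx L q s N g y)
    (hv : v ≠ 0) {f : Dual F V} (hf : l0 ≤ LinearMap.ker f) (hw : f w ≠ 0) :
    g - 1 ≤ ee L N f := by
  have hf0 : f ≠ 0 := by rintro rfl; simp at hw
  apply h.unc f hf0 v hv (hf p.vl)
  intro l hl hvl hlf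
  have h1 := p.cov l hl hvl
  have h2 : ¬ (l0 ⊔ Submodule.span F {w}) ≤ LinearMap.ker f := by
    intro hh
    exact hw (hh (Submodule.mem_sup_right (Submodule.mem_span_singleton_self _)))
  have h3 := h.inf_ker hf0 h2
  rw [finrank_sup_span p.wl, p.r2] at h3
  have h4 : l0 = (l0 ⊔ Submodule.span F {w}) ⊓ LinearMap.ker f := by
    apply Submodule.eq_of_le_of_finrank_eq
    · exact le_inf le_sup_left hf
    · rw [p.r2]; omega
  have h5 : l = l0 := by
    apply Submodule.eq_of_le_of_finrank_eq
    · rw [h4]; exact le_inf h1 hlf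
    · rw [p.r2, h.lines l hl]
  exact p.nL (h5 ▸ hl)

theorem PS.D1 {v w : V} {l0 : Submodule F V} (p : PS L q N y v l0 w) (h : Ctx L q s N g y)
    (hv : v ≠ 0) {m w' : V} {m0 : Submodule F V} (p' : PS L q N y m m0 w')
    (hm : m ∉ l0 ⊔ Submodule.span F {w}) : m0 ≤ l0 ⊔ Submodule.span F {m} := by
  intro z hz
  apply inter_Fil (swap_notMem p.wl hm)
  intro f hf
  rw [mem_Fil, sup_le_iff, Submodule.span_singleton_le_iff_mem] at hf
  have h1 := p.E4 h hv hf.1.1 (by rw [hf.2]; exact one_ne_zero)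
  have h2 := h.gq
  have h3 := h.q2
  by_contra hfz
  have := p'.ez f hf.1.2 (fun hh => hfz (hh hz))
  linarith

/-- the two special lines must meet -/
theorem PS.meet {v w v' w' : V} {l0 l0' : Submodule F V} (p : PS L q N y v l0 w)
    (p' : PS L q N y v' l0' w') (h : Ctx L q s N g y) (hy : y = q * g)
    (hv : v ≠ 0) (hv' : v' ≠ 0) (hvp : v' ∈ l0 ⊔ Submodule.span F {w}) (hvl : v' ∉ l0) :
    l0 ⊓ l0' ≠ ⊥ := by
  intro hbot
  have hq := h.q2
  have hs := h.hs
  have hG : finrank F ↥(l0 ⊔ l0') = 4 := by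
    have := Submodule.finrank_sup_add_finrank_inf_eq l0 l0'
    rw [hbot, p.r2, p'.r2] at this
    simpa using this
  have hvn : v ∉ l0' := by
    intro hh
    have : v ∈ l0 ⊓ l0' := ⟨p.vl, hh⟩
    rw [hbot] at this
    exact hv (by simpa using this)
  have hv1 : v ∈ l0' ⊔ Submodule.span F {w'} := by
    by_contra hh
    have h1 := p'.D1 h hv' p hh
    have h2 : l0 ⊔ l0' ≤ l0' ⊔ Submodule.span F {v} := sup_le h1 le_sup_left
    have h3 := Submodule.finrank_mono h2
    rw [hG, finrank_sup_span hvn, p'.r2] at h3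
    omega
  have hpi : l0 ⊔ Submodule.span F {w} ≤ l0 ⊔ l0' := by
    have : l0 ⊔ Submodule.span F {v'} = l0 ⊔ Submodule.span F {w} := by
      apply Submodule.eq_of_le_of_finrank_eq
      · exact sup_le le_sup_left (by rwa [Submodule.span_singleton_le_iff_mem])
      · rw [finrank_sup_span hvl, finrank_sup_span p.wl]
    rw [← this]
    exact sup_le le_sup_left (by
      rw [Submodule.span_singleton_le_iff_mem]; exact Submodule.mem_sup_right p'.vl)
  have hpi' : l0' ⊔ Submodule.span F {w'} ≤ l0 ⊔ l0' := by
    have : l0' ⊔ Submodule.span F {v} = l0' ⊔ Submodule.span F {w'} := by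
      apply Submodule.eq_of_le_of_finrank_eq
      · exact sup_le le_sup_left (by rwa [Submodule.span_singleton_le_iff_mem])
      · rw [finrank_sup_span hvn, finrank_sup_span p'.wl]
    rw [← this]
    exact sup_le le_sup_right (by
      rw [Submodule.span_singleton_le_iff_mem]; exact Submodule.mem_sup_left p.vl)
  have hout : ∀ m : V, m ∉ l0 ⊔ l0' → 1 ≤ al L m := by
    intro m hm
    have hm0 : m ≠ 0 := by rintro rfl; exact hm (Submodule.zero_mem _)
    by_contra hlt
    have hm1 : al L m = 0 := by have := h.A m; omega
    obtain ⟨-, m0, u, pm⟩ := h.B hm0 hm1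
    have h1 := p.D1 h hv pm (fun hh => hm (hpi hh))
    have h2 := p'.D1 h hv' pm (fun hh => hm (hpi' hh))
    have h3 := Submodule.finrank_sup_add_finrank_inf_eq (l0 ⊔ Submodule.span F {m})
      (l0' ⊔ Submodule.span F {m})
    have h4 : (l0 ⊔ Submodule.span F {m}) ⊔ (l0' ⊔ Submodule.span F {m})
        = (l0 ⊔ l0') ⊔ Submodule.span F {m} := by
      rw [sup_sup_sup_comm, sup_idem]
    rw [h4, finrank_sup_span hm, hG, finrank_sup_span (fun hh => hm (Submodule.mem_sup_left hh)),
      finrank_sup_span (fun hh => hm (Submodule.mem_sup_right hh)), p.r2, p'.r2] at h3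
    have h5 := Submodule.finrank_mono (le_inf h1 h2)
    rw [pm.r2] at h5
    omega
  have h1 := h.SS_top
  rw [SS_add (l0 ⊔ l0') ⊤ le_top] at h1
  have h2 : ∑ m ∈ vec (⊤ : Submodule F V) \ vec (l0 ⊔ l0'), (1:ℤ)
      ≤ ∑ m ∈ vec (⊤ : Submodule F V) \ vec (l0 ⊔ l0'), al L m := by
    apply Finset.sum_le_sum
    intro m hm
    simp only [mem_sdiff, mem_vec] at hm
    exact hout m hm.2
  have hsub : vec (l0 ⊔ l0') ⊆ vec (⊤ : Submodule F V) := by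
    intro u; simp [mem_vec]
  have h3 := Finset.card_sdiff_add_card_eq_card hsub
  rw [card_vec, card_vec, hG, finrank_top, h.rk, h.cq] at h3
  rw [Finset.sum_const, nsmul_eq_mul, mul_one] at h2
  zify at h3
  have h4 := h.SS_mono (show l0 ≤ l0 ⊔ l0' from le_sup_left)
  rw [p.sl] at h4
  have hg := h.hg
  have h5 : ((q:ℤ) - 1) * q * y = q^2 * (q^s - 1) := by rw [hy, ← hg]; ring
  have h6 : (q:ℤ)^(s+3) ≤ (q:ℤ)^(2*s+1) := pow_le_pow_right₀ (by linarith) (by omega)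
  have h7 : (q:ℤ)^(s+3) = q * (q:ℤ)^(s+2) := by ring
  have h8 : (q:ℤ)^(s+2) = q^2 * (q:ℤ)^s := by ring
  have h9 : (q:ℤ)^4 ≤ (q:ℤ)^(s+2) := pow_le_pow_right₀ (by linarith) (by omega)
  have h10 : 2 * (q:ℤ)^(s+2) ≤ q * (q:ℤ)^(s+2) := mul_le_mul_of_nonneg_right hq (by positivity)
  have h11 : (0:ℤ) < q^2 := by positivity
  nlinarith

/-- the vertex -/
theorem Ctx.vertex (h : Ctx L q s N g y) : y = q * g ∧ ∃ P : V, P ≠ 0 ∧ al L P = y - q := by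
  obtain ⟨v, hv, hv0⟩ := h.C
  obtain ⟨hy, l0, w, p⟩ := h.B hv hv0
  refine ⟨hy, ?_⟩
  have hw0 : w ≠ 0 := by rintro rfl; exact p.wl l0.zero_mem
  have hwπ : w ∈ l0 ⊔ Submodule.span F {w} :=
    Submodule.mem_sup_right (Submodule.mem_span_singleton_self _)
  obtain ⟨-, l0', w', p'⟩ := h.B hw0 (p.az w hwπ p.wl)
  have hm := p.meet p' h hy hv hw0 hwπ p.wl
  obtain ⟨P, hP, hP0⟩ := Submodule.exists_mem_ne_zero_of_ne_bot hm
  have hwP : w ∉ Submodule.span F {P} := by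
    intro hh
    exact p.wl ((Submodule.span_singleton_le_iff_mem _ _).2 hP.1 hh)
  have he := line_eq p'.r2 hP0 hP.2 p'.vl hwP
  refine ⟨P, hP0, ?_⟩
  have hPl : Submodule.span F {P} ≤ l0' := (Submodule.span_singleton_le_iff_mem _ _).2 hP.2
  have h1 := p'.sl
  rw [SS_add _ _ hPl, h.SS_span] at h1
  have h2 : ∑ u ∈ vec l0' \ vec (Submodule.span F {P}), al L u = 0 := by
    apply Finset.sum_eq_zero
    intro u hu
    simp only [mem_sdiff, mem_vec] at hu
    apply p.az
    · have : l0' ≤ l0 ⊔ Submodule.span F {w} := by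
        rw [← he]
        exact sup_le (((Submodule.span_singleton_le_iff_mem _ _).2 hP.1).trans le_sup_left)
          le_sup_right
      exact this hu.1
    · intro hul
      apply p.wl
      have h3 := line_eq p'.r2 hP0 hP.2 hu.1 hu.2
      have h4 : l0' ≤ l0 := by
        rw [← h3]
        exact sup_le ((Submodule.span_singleton_le_iff_mem _ _).2 hP.1)
          ((Submodule.span_singleton_le_iff_mem _ _).2 hul)
      exact h4 p'.vl
  rw [h2, add_zero] at h1
  have := h.q2
  exact mul_left_cancel₀ (by linarith) h1

theorem Ctx.e_zero (h : Ctx L q s N g y) {P : V} (hP : P ≠ 0) (hPa : al L P = y - q)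
    {f : Dual F V} (hf : f P ≠ 0) : ee L N f = 0 := by
  have hq := h.q2
  have hs := h.hs
  have hD := h.D (U := ⊥) (w := P) (m := 2*s-1) (by simpa using hP)
    (by rw [finrank_bot, h.rk]; omega)
  rw [SS_bot, bot_sup_eq, h.SS_span, hPa] at hD
  have hs0 : ∑ f ∈ Fil ⊥ P, ee L N f = 0 := by
    have : (q:ℤ) * (q-1) * ∑ f ∈ Fil ⊥ P, ee L N f = 0 := by
      rw [hD]; ring
    rcases mul_eq_zero.1 this with e | e
    · exfalso; nlinarith
    · exact e
  rw [Finset.sum_eq_zero_iff_of_nonneg] at hs0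
  · rw [← ee_smul (inv_ne_zero hf)]
    apply hs0
    rw [mem_Fil]
    refine ⟨bot_le, ?_⟩
    rw [LinearMap.smul_apply, smul_eq_mul, inv_mul_cancel₀ hf]
  · intro f hf
    apply h.e_nonneg
    rintro rfl
    simp [mem_Fil] at hf

theorem arith1 {q Z e g : ℤ} (hq : 2 ≤ q) (hZ : q^2 ≤ Z) (hg : (q-1) * g = Z - 1)
    (he : e ≤ g - 2) (h : Z^2 - 1 - (q-1) * (q * g) ≤ e * (q^2+1)) : False := by
  have h1 : (q-1) * (e * (q^2+1)) ≤ (q-1) * ((g-2) * (q^2+1)) :=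
    mul_le_mul_of_nonneg_left (mul_le_mul_of_nonneg_right he (by positivity)) (by linarith)
  have h2 : (q-1) * (Z^2 - 1 - (q-1) * (q * g)) ≤ (q-1) * (e * (q^2+1)) :=
    mul_le_mul_of_nonneg_left h (by linarith)
  have h3 : (q-1) * ((g-2) * (q^2+1)) = (Z - 1 - 2 * (q-1)) * (q^2+1) := by rw [← hg]; ring
  have h4 : (q-1) * (q * g) = q * (Z-1) := by rw [← hg]; ring
  rw [h4] at h2
  obtain ⟨d, rfl⟩ : ∃ d, Z = q^2 + d := ⟨Z - q^2, by ring⟩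
  have hd : 0 ≤ d := by linarith
  have h5 : 0 < q^2 * (q-1)^3 := by
    have : 0 < q - 1 := by linarith
    positivity
  have h6 : 0 ≤ (2*q^3-4*q^2+q-1) := by nlinarith [mul_nonneg (sq_nonneg q) (show 0 ≤ q - 2 by linarith)]
  have h7 : 0 ≤ d * (2*q^3-4*q^2+q-1) := mul_nonneg hd h6
  have h8 : 0 ≤ (q-1) * d^2 := mul_nonneg (by linarith) (sq_nonneg d)
  nlinarith

theorem Ctx.e_big (h : Ctx L q s N g y) (hy : y = q * g) {P : V} (hP : P ≠ 0)
    (hPa : al L P = y - q) {f : Dual F V} (hf0 : f ≠ 0) (hf : f P = 0) : g - 1 ≤ ee L N f := by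
  by_contra hlt
  have hq := h.q2
  have hs := h.hs
  have hg := h.gq
  have hcov : ∀ v : V, v ≠ 0 → f v = 0 → ∃ l ∈ L, v ∈ l ∧ l ≤ LinearMap.ker f := by
    intro v h1 h2
    by_contra hh
    push Not at hh
    exact hlt (h.unc f hf0 v h1 h2 hh)
  have hpoor : ∀ v : V, v ≠ 0 → f v = 0 → al L v = 0 → ∀ l ∈ L, v ∈ l → l ≤ LinearMap.ker f := by
    intro v hv hfv hv0
    obtain ⟨-, m0, w, p⟩ := h.B hv hv0
    have hPm : P ∈ m0 := by
      apply inter_Fil p.wl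
      intro f' hf'
      rw [mem_Fil] at hf'
      have h1 := p.E4 h hv hf'.1 (by rw [hf'.2]; exact one_ne_zero)
      by_contra hne
      have := h.e_zero hP hPa hne
      linarith
    have hvP : v ∉ Submodule.span F {P} := by
      intro hh
      obtain ⟨a, rfl⟩ := Submodule.mem_span_singleton.1 hh
      have ha : a ≠ 0 := by rintro rfl; simp at hv
      rw [al_smul ha, hPa, hy] at hv0
      nlinarith
    have he := line_eq p.r2 hP hPm p.vl hvP
    have hmf : m0 ≤ LinearMap.ker f := by
      rw [← he]
      exact sup_le ((Submodule.span_singleton_le_iff_mem _ _).2 hf)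
        ((Submodule.span_singleton_le_iff_mem _ _).2 hfv)
    obtain ⟨l, hl, hvl, hlf⟩ := hcov v hv hfv
    have hrk := line_sup_rank hv p.r2 (h.lines l hl) p.vl hvl (fun e => p.nL (e ▸ hl))
    have hπ : m0 ⊔ l = m0 ⊔ Submodule.span F {w} := by
      apply Submodule.eq_of_le_of_finrank_eq
      · exact sup_le le_sup_left (p.cov l hl hvl)
      · rw [hrk, finrank_sup_span p.wl, p.r2]
    intro x hx hvx
    refine (p.cov x hx hvx).trans ?_
    rw [← hπ]
    exact sup_le hmf hlf
  have h1 := sum_rr (L.filter (fun l => l ≤ LinearMap.ker f)) (LinearMap.ker f)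
  have h2 : ∀ l ∈ L.filter (fun l => l ≤ LinearMap.ker f),
      (((vec (l ⊓ LinearMap.ker f)).card : ℤ) - 1) = (q:ℤ)^2 - 1 := by
    intro l hl
    simp only [mem_filter] at hl
    rw [inf_eq_left.2 hl.2, card_vec, h.lines l hl.1, h.cq]; push_cast; ring
  rw [Finset.sum_congr rfl h2, Finset.sum_const, nsmul_eq_mul] at h1
  have h0 : (0:V) ∈ vec (LinearMap.ker f) := by simp [mem_vec]
  have h3 : ∑ v ∈ (vec (LinearMap.ker f)).erase 0, ((q:ℤ) - (q-1) * al L v) ≤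
    ∑ v ∈ (vec (LinearMap.ker f)).erase 0, rr (L.filter (fun l => l ≤ LinearMap.ker f)) v := by
    apply Finset.sum_le_sum
    intro v hv
    simp only [mem_erase, mem_vec, LinearMap.mem_ker] at hv
    have hA := h.A v
    by_cases hv0 : al L v = 0
    · have hX : ((L.filter (fun l => v ∈ l)).card : ℤ) = q := by
        rw [al, if_neg hv.1, rr, h.cq] at hv0
        linarith
      rw [hv0, rr]
      have : (filter (fun l => v ∈ l) (L.filter (fun l => l ≤ LinearMap.ker f)))
          = L.filter (fun l => v ∈ l) := by
        ext l
        simp only [mem_filter]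
        have := hpoor v hv.1 hv.2 hv0 l
        tauto
      rw [this, hX]; simp
    · obtain ⟨l, h4, h5, h6⟩ := hcov v hv.1 hv.2
      have h7 : 0 < (filter (fun l => v ∈ l) (L.filter (fun l => l ≤ LinearMap.ker f))).card := by
        apply Finset.card_pos.2
        exact ⟨l, by simp [h4, h5, h6]⟩
      have h8 : (1:ℤ) ≤ rr (L.filter (fun l => l ≤ LinearMap.ker f)) v := by
        rw [rr]; exact_mod_cast h7
      have h9 : 1 ≤ al L v := by omega
      nlinarith
  have h6 : ∑ v ∈ (vec (LinearMap.ker f)).erase 0, al L v = SS L (LinearMap.ker f) := by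
    rw [SS, ← Finset.add_sum_erase _ _ h0, al_zero, zero_add]
  rw [h1, Finset.sum_sub_distrib, ← Finset.mul_sum, h6, h.SS_ker hf0, Finset.sum_const,
    card_erase_of_mem h0, card_vec, ker_ne hf0 h.rk, h.cq,
    nsmul_eq_mul, Nat.cast_sub (Nat.one_le_pow _ _ (by have := h.hq; omega))] at h3
  have h5 := h.hN
  have h4 : ((L.filter (fun l => l ≤ LinearMap.ker f)).card : ℤ) = ee L N f + N := by
    rw [ee, nf]; ring
  rw [h4] at h3
  push_cast at h3
  set e := ee L N f
  have hZ : (q:ℤ)^(2*s) = ((q:ℤ)^s)^2 := by rw [← pow_mul, mul_comm]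
  rw [hZ] at h3 h5
  have h10 : ((q:ℤ)-1) * (((q:ℤ)^s)^2 - 1 - (q-1) * (q * g)) ≤ (q-1) * (e * (q^2+1)) := by
    rw [hy] at h3
    linarith
  exact arith1 hq (pow_le_pow_right₀ (by linarith) hs) h.hg (by omega)
    (le_of_mul_le_mul_left h10 (by linarith))

theorem Ctx.false (h : Ctx L q s N g y) : False := by
  obtain ⟨hy, P, hP, hPa⟩ := h.vertex
  have hq := h.q2
  have hs := h.hs
  have hg := h.gq
  have hzero : ∀ u : V, u ∉ Submodule.span F {P} → al L u = 0 := by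
    intro u hu
    have hD := h.D hu (m := 2*s-2) (by rw [finrank_span_singleton hP, h.rk]; omega)
    have hc := card_Fil hu (m := 2*s-1) (by rw [finrank_span_singleton hP, h.rk]; omega)
    have h1 : ((Fil (Submodule.span F {P}) u).card : ℤ) * (g-1)
        ≤ ∑ f ∈ Fil (Submodule.span F {P}) u, ee L N f := by
      rw [← nsmul_eq_mul, ← Finset.sum_const]
      apply Finset.sum_le_sum
      intro f hf
      rw [mem_Fil, Submodule.span_singleton_le_iff_mem] at hf
      refine h.e_big hy hP hPa ?_ hf.1
      rintro rfl
      simp at hf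
    rw [hc, h.cq] at h1
    have h2 := mul_le_mul_of_nonneg_left h1 (show (0:ℤ) ≤ q * (q-1) by nlinarith)
    have e2 : q^(2*s-1) = q * q^(2*s-2) := by
      rw [← pow_succ']; congr 1; omega
    rw [hD, e2] at h2
    have hp : (0:ℤ) < (q:ℤ)^(2*s-2) := by positivity
    have h3 : (q:ℤ)^(2*s-2) * (q * (q-1) * (q * (g-1))) ≤ (q:ℤ)^(2*s-2) *
      (q * SS L (Submodule.span F {P}) - SS L (Submodule.span F {P} ⊔ Submodule.span F {u})
        + (q-1) * (y-q)) := by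
      push_cast at h2
      linarith
    have h4 := le_of_mul_le_mul_left h3 hp
    rw [SS_add _ _ (show Submodule.span F {P} ≤ Submodule.span F {P} ⊔ Submodule.span F {u} from
      le_sup_left), h.SS_span, hPa, hy] at h4
    have h5 : ∑ v ∈ vec (Submodule.span F {P} ⊔ Submodule.span F {u}) \ vec (Submodule.span F {P}),
        al L v ≤ 0 := by linarith
    have h6 := le_antisymm h5 (Finset.sum_nonneg (fun v _ => h.A v))
    rw [Finset.sum_eq_zero_iff_of_nonneg (fun v _ => h.A v)] at h6
    apply h6
    simp only [mem_sdiff, mem_vec]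
    exact ⟨Submodule.mem_sup_right (Submodule.mem_span_singleton_self _), hu⟩
  have h1 := h.SS_top
  rw [SS_add (Submodule.span F {P}) ⊤ le_top, h.SS_span, hPa] at h1
  rw [Finset.sum_eq_zero] at h1
  · have h2 : ((q:ℤ) - 1) * (q * y) = 0 := by linarith
    have h3 : 0 < y := by rw [hy]; nlinarith
    have h4 : 0 < ((q:ℤ) - 1) * (q * y) := by
      apply mul_pos (by linarith) (mul_pos (by linarith) h3)
    linarith
  · intro u hu
    simp only [mem_sdiff, mem_vec] at hu
    exact hzero u hu.2

end stepD

section final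
variable {F : Type} [Field F] [Fintype F]

theorem finrank_map_add {V W : Type} [AddCommGroup V] [Module F V] [Fintype V]
    [AddCommGroup W] [Module F W] (φ : V →ₗ[F] W) (p : Submodule F V) :
    finrank F (p.map φ) + finrank F ↥(p ⊓ LinearMap.ker φ) = finrank F p := by
  have h := LinearMap.finrank_range_add_finrank_ker (φ.domRestrict p)
  rw [LinearMap.range_domRestrict] at h
  have h2 : (LinearMap.ker (φ.domRestrict p)).map p.subtype = p ⊓ LinearMap.ker φ := by
    ext x
    simp [LinearMap.domRestrict_apply]
    tauto
  rw [← h2, Submodule.finrank_map_subtype_eq]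
  exact h

def NN (q s : ℕ) : ℕ := ∑ i ∈ Finset.range s, q ^ (2 * i)
def GG (q s : ℕ) : ℕ := ∑ i ∈ Finset.range s, q ^ i

theorem NN_eq (q s : ℕ) : (NN q s : ℤ) * ((q:ℤ)^2 - 1) = (q:ℤ)^(2*s) - 1 := by
  have := geom_sum_mul ((q:ℤ)^2) s
  rw [NN]; push_cast
  simp_rw [pow_mul]
  exact this

theorem GG_eq (q s : ℕ) : ((q:ℤ) - 1) * (GG q s : ℤ) = (q:ℤ)^s - 1 := by
  have := geom_sum_mul (q:ℤ) s
  rw [GG]; push_cast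
  rw [mul_comm]; exact this

theorem NN_succ (q s : ℕ) : NN q (s+1) = q^2 * NN q s + 1 := by
  rw [NN, Finset.sum_range_succ', NN, Finset.mul_sum]
  congr 1
  apply Finset.sum_congr rfl
  intro i _
  ring

theorem GG_succ (q s : ℕ) : GG q (s+1) = q * GG q s + 1 := by
  rw [GG, Finset.sum_range_succ', GG, Finset.mul_sum]
  congr 1
  apply Finset.sum_congr rfl
  intro i _
  ring

theorem base {V : Type} [AddCommGroup V] [Module F V] [Fintype V] (hV : finrank F V = 3)
    (L : Finset (Submodule F V)) (hL : ∀ l ∈ L, finrank F l = 2)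
    (hc : ∀ T : Submodule F V, finrank F T = 2 → ∃ l ∈ L, l ≤ T) :
    (Fintype.card F)^2 + 1 + Fintype.card F ≤ L.card := by
  have : Finite (Dual F V) := Module.finite_of_finite F
  have : Fintype (Dual F V) := Fintype.ofFinite _
  have hall : ∀ T : Submodule F V, finrank F T = 2 → T ∈ L := by
    intro T hT
    obtain ⟨l, hl, hlT⟩ := hc T hT
    have := Submodule.eq_of_le_of_finrank_eq hlT (by rw [hT, hL l hl])
    exact this ▸ hl
  set q := Fintype.card F with hq
  have hq2 : 2 ≤ q := Fintype.one_lt_card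
  have h1 : ((univ : Finset (Dual F V)).erase 0).card ≤
      (q - 1) * (((univ : Finset (Dual F V)).erase 0).image LinearMap.ker).card := by
    apply Finset.card_le_mul_card_image
    intro K hK
    simp only [mem_image, mem_erase, mem_univ, and_true] at hK
    obtain ⟨f, hf, rfl⟩ := hK
    obtain ⟨w, hw⟩ : ∃ w, f w ≠ 0 := by
      by_contra hh
      push Not at hh
      exact hf (LinearMap.ext hh)
    have e1 : ((univ : Finset F).erase 0).card = q - 1 := by
      rw [Finset.card_erase_of_mem (mem_univ _), Finset.card_univ]
    rw [← e1]
    apply Finset.card_le_card_of_injOn (fun g => g w)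
    · intro g hg
      simp only [mem_coe, mem_filter, mem_erase, mem_univ, and_true] at hg ⊢
      intro h0
      have : w ∈ LinearMap.ker g := h0
      rw [hg.2] at this
      exact hw this
    · intro g hg g' hg' he
      simp only [mem_coe, mem_filter, mem_erase, mem_univ, and_true] at hg hg' he
      have hu : ∀ u : V, u - (f u / f w) • w ∈ LinearMap.ker f := by
        intro u
        simp [hw]
      apply LinearMap.ext
      intro u
      have a1 := hu u
      have a2 := hu u
      rw [← hg.2] at a1
      rw [← hg'.2] at a2
      simp only [LinearMap.mem_ker, map_sub, map_smul, smul_eq_mul] at a1 a2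
      rw [he] at a1
      linear_combination a1 - a2
  have h2 : (((univ : Finset (Dual F V)).erase 0).image LinearMap.ker) ⊆ L := by
    intro K hK
    simp only [mem_image, mem_erase, mem_univ, and_true] at hK
    obtain ⟨f, hf, rfl⟩ := hK
    exact hall _ (ker_ne hf hV)
  have h3 := h1.trans (Nat.mul_le_mul_left _ (Finset.card_le_card h2))
  rw [Finset.card_erase_of_mem (mem_univ _), Finset.card_univ,
    ← Nat.card_eq_fintype_card, Module.natCard_eq_pow_finrank (K := F),
    Subspace.dual_finrank_eq, hV, Nat.card_eq_fintype_card, ← hq] at h3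
  have h4 : 1 ≤ q^3 := Nat.one_le_pow _ _ (by omega)
  zify [h4, show 1 ≤ q by omega] at h3 ⊢
  have hq2' : (2:ℤ) ≤ q := by exact_mod_cast hq2
  refine le_of_mul_le_mul_left (a := (q:ℤ) - 1) ?_ (by linarith)
  linarith

theorem main (s : ℕ) : ∀ (V : Type) [AddCommGroup V] [Module F V] [Fintype V]
    (_ : finrank F V = 2 * (s + 1) + 1)
    (L : Finset (Submodule F V)) (_ : ∀ l ∈ L, finrank F l = 2)
    (_ : ∀ T : Submodule F V, finrank F T = (s + 1) + 1 → ∃ l ∈ L, l ≤ T),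
    (Fintype.card F)^2 * NN (Fintype.card F) (s + 1) + 1 +
      Fintype.card F * GG (Fintype.card F) (s + 1) ≤ L.card := by
  induction s with
  | zero =>
    intro V _ _ _ hV L hL hc
    have := base hV L hL hc
    simpa [NN, GG] using this
  | succ s ih =>
    intro V _ _ _ hV L hL hc
    have : Finite (Dual F V) := Module.finite_of_finite F
    have : Fintype (Dual F V) := Fintype.ofFinite _
    by_contra hlt
    obtain ⟨q, hq⟩ : ∃ q, q = Fintype.card F := ⟨_, rfl⟩
    rw [← hq] at hlt ih
    have hq2 : 2 ≤ q := by rw [hq]; exact Fintype.one_lt_card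
    refine Ctx.false (L := L) (q := q) (s := s + 1 + 1) (N := NN q (s+1+1)) (g := GG q (s+1+1))
      (y := L.card - (q:ℤ)^2 * NN q (s+1+1)) ⟨hq.symm, hq2, by omega, hV, NN_eq _ _, GG_eq _ _,
        rfl, hL, ?_, ?_⟩
    · push Not at hlt
      have : (L.card : ℤ) < q^2 * NN q (s+1+1) + 1 + q * GG q (s+1+1) := by exact_mod_cast hlt
      linarith
    · intro f hf v hv hfv hun
      let K := LinearMap.ker f
      have hK : finrank F K = 2 * (s + 1 + 1) := ker_ne hf hV
      let v' : K := ⟨v, hfv⟩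
      have hv' : v' ≠ 0 := fun h => hv (congrArg Subtype.val h)
      have : Fintype K := Fintype.ofFinite _
      let W := K ⧸ (Submodule.span F {v'})
      have : Finite W := Quotient.finite _
      have : Fintype W := Fintype.ofFinite _
      let φ : K →ₗ[F] W := (Submodule.span F {v'}).mkQ
      have hφ : LinearMap.ker φ = Submodule.span F {v'} := Submodule.ker_mkQ _
      have hW : finrank F W = 2 * (s + 1) + 1 := by
        have := Submodule.finrank_quotient_add_finrank (Submodule.span F {v'})
        rw [finrank_span_singleton hv', hK] at this
        change finrank F W + 1 = _ at this
        omega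
      let ψ : Submodule F V → Submodule F W := fun l => (l.comap K.subtype).map φ
      have h1 := ih W hW ((L.filter (fun l => l ≤ K)).image ψ) ?_ ?_
      · have h2 := h1.trans Finset.card_image_le
        have h3 : nf L f = ((L.filter (fun l => l ≤ K)).card : ℤ) := rfl
        rw [ee, h3, NN_succ, GG_succ]
        zify at h2
        push_cast
        linarith
      · intro x hx
        simp only [mem_image, mem_filter] at hx
        obtain ⟨l, ⟨hl, hlK⟩, rfl⟩ := hx
        have e1 := finrank_map_add φ (l.comap K.subtype)
        have e2 : (l.comap K.subtype) ⊓ LinearMap.ker φ = ⊥ := by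
          rw [hφ, ← disjoint_iff, Submodule.disjoint_span_singleton' hv']
          intro hh
          exact hun l hl hh hlK
        rw [e2, finrank_bot, add_zero] at e1
        change finrank F ((l.comap K.subtype).map φ) = 2
        rw [e1, ← Submodule.finrank_map_subtype_eq, Submodule.map_comap_subtype,
          inf_eq_right.2 hlK, hL l hl]
      · intro T hT
        have e1 := finrank_map_add φ (T.comap φ)
        have e0 : T.comap φ ⊓ LinearMap.ker φ = LinearMap.ker φ :=
          inf_eq_right.2 (fun x hx => by
            rw [Submodule.mem_comap, LinearMap.mem_ker.1 hx]; exact T.zero_mem)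
        rw [Submodule.map_comap_eq_of_surjective (Submodule.mkQ_surjective _), hT,
          e0, hφ, finrank_span_singleton hv'] at e1
        obtain ⟨l, hl, hlT⟩ := hc ((T.comap φ).map K.subtype)
          (by rw [Submodule.finrank_map_subtype_eq, ← e1])
        have hlK : l ≤ K := hlT.trans (Submodule.map_subtype_le _ _)
        refine ⟨ψ l, Finset.mem_image_of_mem _ (by simp [hl, hlK]), ?_⟩
        change (l.comap K.subtype).map φ ≤ T
        rw [Submodule.map_le_iff_le_comap]
        intro x hx
        obtain ⟨z, hz, hzx⟩ := hlT hx
        have : z = x := Subtype.ext hzx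
        exact this ▸ hz

theorem exists_ge_finrank {V : Type} [AddCommGroup V] [Module F V] [Fintype V]
    (Y : Submodule F V) (d : ℕ) (hd : finrank F Y + d ≤ finrank F V) :
    ∃ X : Submodule F V, Y ≤ X ∧ finrank F X = finrank F Y + d := by
  induction d with
  | zero => exact ⟨Y, le_rfl, rfl⟩
  | succ d ih =>
    obtain ⟨X, hX, hX2⟩ := ih (by omega)
    have : ∃ w, w ∉ X := by
      by_contra hh
      push Not at hh
      have h0 : X = ⊤ := Submodule.eq_top_iff'.2 hh
      rw [h0, finrank_top] at hX2
      omega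
    obtain ⟨w, hw⟩ := this
    exact ⟨_, hX.trans le_sup_left, by rw [finrank_sup_span hw, hX2]; omega⟩

theorem dualize (s : ℕ) (S : Finset (Submodule F (Fin (2 * (s+1) + 1) → F)))
    (h1 : ∀ X ∈ S, finrank F X = 2 * (s+1) - 1)
    (h2 : ∀ Y : Submodule F (Fin (2 * (s+1) + 1) → F), finrank F Y = s + 1 → ∃ X ∈ S, Y ≤ X) :
    (Fintype.card F)^2 * NN (Fintype.card F) (s + 1) + 1 +
      Fintype.card F * GG (Fintype.card F) (s + 1) ≤ S.card := by
  have : Finite (Dual F (Fin (2 * (s+1) + 1) → F)) := Module.finite_of_finite F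
  have : Fintype (Dual F (Fin (2 * (s+1) + 1) → F)) := Fintype.ofFinite _
  have hn : finrank F (Fin (2 * (s+1) + 1) → F) = 2 * (s+1) + 1 := by simp
  refine (main s (Dual F (Fin (2 * (s+1) + 1) → F)) ?_
    (S.image Submodule.dualAnnihilator) ?_ ?_).trans Finset.card_image_le
  · rw [Subspace.dual_finrank_eq, hn]
  · intro l hl
    simp only [mem_image] at hl
    obtain ⟨X, hX, rfl⟩ := hl
    have := Subspace.finrank_add_finrank_dualAnnihilator_eq X
    rw [h1 X hX, hn] at this
    omega
  · intro T hT
    have e1 := Subspace.finrank_add_finrank_dualCoannihilator_eq T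
    rw [hT, hn] at e1
    obtain ⟨X, hX, hY⟩ := h2 T.dualCoannihilator (by omega)
    refine ⟨X.dualAnnihilator, Finset.mem_image_of_mem _ hX, ?_⟩
    rw [← Subspace.dualCoannihilator_dualAnnihilator_eq (W := T)]
    exact Submodule.dualAnnihilator_anti hY

end final
end EM

/-- The Eisfeld–Metsch lower bound. -/
theorem eisfeld_metsch (q s : ℕ) (hq : IsPrimePow q) (hs : 2 ≤ s)
    (F : Type) [Field F] [Fintype F] (hF : Fintype.card F = q) :
    (coveringNumber F (2 * s + 1) (2 * s - 1) s : ℚ) ≥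
      ((q : ℚ) ^ (2 * s + 2) - (q : ℚ) ^ 2) / ((q : ℚ) ^ 2 - 1) +
        ((q : ℚ) ^ (s + 1) - 1) / ((q : ℚ) - 1) := by
  obtain ⟨s, rfl⟩ : ∃ t, s = t + 1 := ⟨s - 1, by omega⟩
  have hne : { m : ℕ | ∃ S : Finset (Submodule F (Fin (2 * (s+1) + 1) → F)),
    S.card = m ∧
    (∀ X ∈ S, finrank F X = 2 * (s+1) - 1) ∧
    (∀ Y : Submodule F (Fin (2 * (s+1) + 1) → F), finrank F Y = s + 1 →
      ∃ X ∈ S, Y ≤ X) }.Nonempty := by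
    classical
    have : Fintype (Submodule F (Fin (2 * (s+1) + 1) → F)) := Fintype.ofFinite _
    refine ⟨_, Finset.univ.filter (fun X => finrank F X = 2 * (s+1) - 1), rfl, ?_, ?_⟩
    · intro X hX; simpa using hX
    · intro Y hY
      obtain ⟨X, hX1, hX2⟩ := EM.exists_ge_finrank Y s (by rw [hY]; simp; omega)
      exact ⟨X, by simp only [Finset.mem_filter, Finset.mem_univ, true_and]; omega, hX1⟩
  obtain ⟨S, hS, h1, h2⟩ := Nat.sInf_mem hne
  have h3 := EM.dualize s S h1 h2
  rw [hS, hF] at h3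
  have hq2 : 2 ≤ q := hq.two_le
  have hq2' : (2:ℚ) ≤ q := by exact_mod_cast hq2
  have e1 : (EM.NN q (s+1) : ℚ) * ((q:ℚ)^2 - 1) = (q:ℚ)^(2*(s+1)) - 1 := by
    exact_mod_cast EM.NN_eq q (s+1)
  have e2 : ((q:ℚ) - 1) * (EM.GG q (s+1) : ℚ) = (q:ℚ)^(s+1) - 1 := by
    exact_mod_cast EM.GG_eq q (s+1)
  have d1 : (q:ℚ)^2 - 1 ≠ 0 := by nlinarith
  have d2 : (q:ℚ) - 1 ≠ 0 := by linarith
  have f1 : ((q : ℚ) ^ (2 * (s+1) + 2) - (q : ℚ) ^ 2) / ((q : ℚ) ^ 2 - 1)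
      = (q:ℚ)^2 * EM.NN q (s+1) := by
    rw [div_eq_iff d1, mul_assoc, e1]; ring
  have f2 : ((q : ℚ) ^ (s + 1 + 1) - 1) / ((q : ℚ) - 1) = 1 + q * EM.GG q (s+1) := by
    rw [div_eq_iff d2]
    linear_combination -(q:ℚ) * e2
  rw [f1, f2, ge_iff_le]
  have h4 : ((q^2 * EM.NN q (s+1) + 1 + q * EM.GG q (s+1) : ℕ) : ℚ) ≤
      (coveringNumber F (2 * (s+1) + 1) (2 * (s+1) - 1) (s+1) : ℚ) := by
    exact_mod_cast h3
  push_cast at h4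
  linarith
end

section
/- Let q be a prime power and let x, s be integers with 1 ≤ x ≤ s. Then 𝒞_q(2s+x, 2s+x−2, s+x−1) ≤ (q^{2s+2x}−q^{2x})/(q^2−1) + ((q^x−1)/(q−1)) · ((q^{s+x}−q^{x−1})/(q−1)). -/
open Module

lemma metsch_fiber {α β γ : Type*} [DecidableEq β] (s : Finset α) (f : α → β) (P : Finset γ)
    (g : α → γ → α) (h : ∀ a ∈ s, ∀ c ∈ P, g a c ∈ s ∧ f (g a c) = f a)
    (hinj : ∀ a ∈ s, Set.InjOn (g a) (P : Set γ)) :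
    P.card * (s.image f).card ≤ s.card := by
  classical
  apply Finset.mul_card_image_le_card
  intro b hb
  obtain ⟨a, ha, rfl⟩ := Finset.mem_image.1 hb
  rw [← Finset.card_image_of_injOn (hinj a ha)]
  apply Finset.card_le_card
  intro y hy
  obtain ⟨c, hc, rfl⟩ := Finset.mem_image.1 hy
  simpa using h a ha c hc

lemma metsch_pair {F V : Type*} [Field F] [AddCommGroup V] [Module F V] {a b : V}
    (h : ∀ s t : F, s • a + t • b = 0 → s = 0 ∧ t = 0) :
    finrank F (Submodule.span F {a, b}) = 2 := by
  have hl : LinearIndependent F ![a, b] := LinearIndependent.pair_iff.2 h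
  have := finrank_span_eq_card hl
  rw [Matrix.range_cons_cons_empty] at this
  simpa using this

lemma metsch_span_eq {F V : Type*} [Field F] [AddCommGroup V] [Module F V] [FiniteDimensional F V]
    {a b a' b' : V}
    (h : finrank F (Submodule.span F {a, b}) = 2) (h' : finrank F (Submodule.span F {a', b'}) = 2)
    (ha : a' ∈ Submodule.span F {a, b}) (hb : b' ∈ Submodule.span F {a, b}) :
    Submodule.span F {a', b'} = Submodule.span F {a, b} := by
  apply Submodule.eq_of_le_of_finrank_eq
  · rw [Submodule.span_le]
    rintro z (rfl | rfl)
    · exact ha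
    · exact hb
  · rw [h, h']

lemma metsch_meet {F V : Type*} [Field F] [AddCommGroup V] [Module F V] [FiniteDimensional F V]
    (A B : Submodule F V) (h : finrank F V < finrank F A + finrank F B) :
    ∃ v, v ≠ 0 ∧ v ∈ A ∧ v ∈ B := by
  have h1 := Submodule.finrank_sup_add_finrank_inf_eq A B
  have h2 := Submodule.finrank_le (A ⊔ B)
  have h3 : A ⊓ B ≠ ⊥ := by
    intro h0
    rw [h0, finrank_bot] at h1
    omega
  obtain ⟨v, hv, hv0⟩ := Submodule.exists_mem_ne_zero_of_ne_bot h3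
  exact ⟨v, hv0, hv.1, hv.2⟩

lemma metsch_c (F : Type*) [Field F] [Finite F] : ∃ c : F, ∀ t : F, t * t - t ≠ c := by
  by_contra! h
  have hs : Function.Surjective (fun t : F => t * t - t) := h
  have hi := Finite.injective_iff_surjective.2 hs
  have := @hi 0 1 (by simp)
  exact zero_ne_one this

section
variable {F X M N : Type} [Field F] [AddCommGroup X] [Module F X]
  [AddCommGroup M] [Module F M] [AddCommGroup N] [Module F N]

lemma metsch_J {c : F} (hc : ∀ t : F, t * t - t ≠ c) {J : N →ₗ[F] N}
    (hJ : ∀ v, J (J v) = J v + c • v) {v : N} (hv : v ≠ 0) (a b : F)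
    (h : a • v + b • J v = 0) : a = 0 ∧ b = 0 := by
  by_cases hb : b = 0
  · subst hb
    simpa [hv] using h
  · exfalso
    have h1 : J v = (-(b⁻¹ * a)) • v := by
      have : b⁻¹ • (a • v + b • J v) = 0 := by rw [h, smul_zero]
      rw [smul_add, smul_smul, smul_smul, inv_mul_cancel₀ hb, one_smul] at this
      rw [neg_smul]
      exact eq_neg_of_add_eq_zero_right this
    set t := -(b⁻¹ * a)
    have h2 := hJ v
    rw [h1, map_smul, h1, smul_smul, ← add_smul, ← sub_eq_zero, ← sub_smul] at h2
    rcases smul_eq_zero.1 h2 with h3 | h3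
    · exact hc t (by linear_combination h3)
    · exact hv h3

/-- first type of lines -/
def metschL1 (J : N →ₗ[F] N) (w : X × X × N) : Submodule F (X × N) :=
  Submodule.span F {(w.1, w.2.2), (w.2.1, J w.2.2)}

lemma metschL1_rank {c : F} (hc : ∀ t : F, t * t - t ≠ c) {J : N →ₗ[F] N}
    (hJ : ∀ v, J (J v) = J v + c • v) (w : X × X × N) (hw : w.2.2 ≠ 0) :
    finrank F (metschL1 J w) = 2 := by
  apply metsch_pair
  intro s t h
  exact metsch_J hc hJ hw s t (by simpa using congrArg Prod.snd h)

lemma metschL1_card [Fintype F] [Fintype X] [Fintype N] [DecidableEq N]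
    [DecidableEq (Submodule F (X × N))]
    {c : F} (hc : ∀ t : F, t * t - t ≠ c) {J : N →ₗ[F] N}
    (hJ : ∀ v, J (J v) = J v + c • v) :
    (Fintype.card F ^ 2 - 1) *
      (((Finset.univ : Finset X) ×ˢ (Finset.univ : Finset X) ×ˢ
        (Finset.univ.erase (0 : N))).image (metschL1 J)).card ≤
      Fintype.card X * (Fintype.card X * (Fintype.card N - 1)) := by
  classical
  have key := metsch_fiber ((Finset.univ : Finset X) ×ˢ (Finset.univ : Finset X) ×ˢ
        (Finset.univ.erase (0 : N))) (metschL1 (F := F) J) (Finset.univ.erase (0 : F × F))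
        (fun w ab => (ab.1 • w.1 + ab.2 • w.2.1, (ab.2 * c) • w.1 + (ab.1 + ab.2) • w.2.1,
          ab.1 • w.2.2 + ab.2 • J w.2.2)) ?_ ?_
  · simpa [Finset.card_erase_of_mem, Finset.card_product, sq] using key
  · rintro ⟨y, z, v⟩ hv ⟨a, b⟩ hab
    simp at hv hab
    have hne : a • v + b • J v ≠ 0 := by
      intro h0
      exact absurd (metsch_J hc hJ hv a b h0) (by tauto)
    refine ⟨by simpa using hne, ?_⟩
    apply metsch_span_eq
    · exact metschL1_rank hc hJ (y, z, v) hv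
    · exact metschL1_rank hc hJ (_, _, _) hne
    · rw [Submodule.mem_span_pair]
      exact ⟨a, b, by simp⟩
    · rw [Submodule.mem_span_pair]
      refine ⟨b * c, a + b, ?_⟩
      simp [hJ]
      module
  · rintro ⟨y, z, v⟩ hv ⟨a, b⟩ - ⟨a', b'⟩ - h
    simp at hv h
    have h2 := metsch_J hc hJ hv (a - a') (b - b') (by
      rw [sub_smul, sub_smul]
      have := h.2.2
      rw [← sub_eq_zero] at this
      rw [← this]; abel)
    ext
    · exact sub_eq_zero.1 h2.1
    · exact sub_eq_zero.1 h2.2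

/-- second type of lines -/
def metschL2 (i : X →ₗ[F] M) (w : X × X × (M × F)) : Submodule F (X × (M × M)) :=
  Submodule.span F {(w.1, 0), (w.2.1, (w.2.2.1, w.2.2.2 • i w.1))}

lemma metschL2_rank {i : X →ₗ[F] M} (hi : Function.Injective i) (w : X × X × (M × F))
    (hp : w.1 ≠ 0) (hw : w.2.2 ≠ 0) :
    finrank F (metschL2 i w) = 2 := by
  obtain ⟨p, y, a, l⟩ := w
  apply metsch_pair
  intro s t h
  have hip : i p ≠ 0 := fun h => hp (hi (by simpa using h))
  simp at h hp hw
  have ht : t = 0 := by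
    by_contra ht
    simp only [ht, hip, false_or, or_false] at h
    exact hw h.2.1 h.2.2
  subst ht
  simpa [hp] using h

lemma metschL2_card [Fintype F] [Fintype X] [Fintype M] [DecidableEq X] [DecidableEq (M × F)]
    [DecidableEq (Submodule F (X × (M × M)))]
    {i : X →ₗ[F] M} (hi : Function.Injective i) :
    ((Fintype.card F - 1) * ((Fintype.card F - 1) * Fintype.card F)) *
      (((Finset.univ.erase (0 : X)) ×ˢ (Finset.univ : Finset X) ×ˢ
        (Finset.univ.erase (0 : M × F))).image (metschL2 i)).card ≤
      (Fintype.card X - 1) * (Fintype.card X * (Fintype.card M * Fintype.card F - 1)) := by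
  classical
  have key := metsch_fiber ((Finset.univ.erase (0 : X)) ×ˢ (Finset.univ : Finset X) ×ˢ
        (Finset.univ.erase (0 : M × F))) (metschL2 i)
        ((Finset.univ.erase (0 : F)) ×ˢ (Finset.univ.erase (0 : F)) ×ˢ (Finset.univ : Finset F))
        (fun w m => (m.1 • w.1, m.2.1 • w.2.1 + m.2.2 • w.1,
          (m.2.1 • w.2.2.1, m.2.1 * w.2.2.2 * m.1⁻¹))) ?_ ?_
  · simpa [Finset.card_erase_of_mem, Finset.card_product] using key
  · rintro ⟨p, y, a, l⟩ hw ⟨m, n, k⟩ hm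
    simp at hw hm
    have h1 : m • p ≠ 0 := by simp [hw, hm]
    have h2 : ((n • a, n * l * m⁻¹) : M × F) ≠ 0 := by
      simp [hm]; tauto
    refine ⟨by simpa [hw, hm] using hw.2, ?_⟩
    apply metsch_span_eq
    · exact metschL2_rank hi (p, y, (a, l)) hw.1 (by simpa using hw.2)
    · exact metschL2_rank hi (_, _, (_, _)) h1 h2
    · rw [Submodule.mem_span_pair]
      exact ⟨m, 0, by simp⟩
    · rw [Submodule.mem_span_pair]
      refine ⟨k, n, ?_⟩
      simp [smul_smul, hm, mul_assoc, add_comm]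
  · rintro ⟨p, y, a, l⟩ hw ⟨m, n, k⟩ hm ⟨m', n', k'⟩ hm' h
    simp at hw hm hm' h
    obtain ⟨h1, h2, h3, h4⟩ := h
    have e1 : m = m' := smul_left_injective F hw.1 h1
    subst e1
    have e2 : n = n' := by
      by_cases ha : a = 0
      · have hl := hw.2 ha
        have := h4
        simpa [hm, hl] using this
      · exact smul_left_injective F ha h3
    subst e2
    have e3 : k = k' := smul_left_injective F hw.1 (add_left_cancel h2)
    subst e3
    rfl

lemma metsch_cover [FiniteDimensional F X] [FiniteDimensional F M]
    {c : F} (hc : ∀ t : F, t * t - t ≠ c) {J : M × M →ₗ[F] M × M}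
    (hJ : ∀ v, J (J v) = J v + c • v)
    {i : X →ₗ[F] M} (hi : Function.Injective i)
    (U : Submodule F (X × (M × M))) (hU : finrank F U = finrank F M + 1) :
    (∃ w : X × X × (M × M), w.2.2 ≠ 0 ∧ metschL1 J w ≤ U) ∨
    (∃ w : X × X × (M × F), w.1 ≠ 0 ∧ w.2.2 ≠ 0 ∧ metschL2 i w ≤ U) := by
  set E : Submodule F (M × M) := U.map (LinearMap.snd F X (M × M)) with hE
  set D : Submodule F X := U.comap (LinearMap.inl F X (M × M)) with hD
  have hdim : finrank F E + finrank F D = finrank F M + 1 := by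
    have h1 := LinearMap.finrank_range_add_finrank_ker ((LinearMap.snd F X (M × M)).comp U.subtype)
    rw [hU, LinearMap.range_comp, Submodule.range_subtype] at h1
    rw [← h1]
    congr 1
    let f : D →ₗ[F] LinearMap.ker ((LinearMap.snd F X (M × M)).comp U.subtype) :=
      { toFun := fun d => ⟨⟨(d.1, 0), d.2⟩, by simp⟩
        map_add' := fun a b => by ext <;> simp
        map_smul' := fun a b => by ext <;> simp }
    refine LinearEquiv.finrank_eq (LinearEquiv.ofBijective f ⟨?_, ?_⟩)
    · intro a b h
      have := congrArg (fun z => z.1.1.1) h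
      exact Subtype.ext this
    · rintro ⟨⟨⟨a, b⟩, hab⟩, h⟩
      have hb : b = 0 := by simpa using h
      subst hb
      exact ⟨⟨a, hab⟩, rfl⟩
  have hlift : ∀ v ∈ E, ∃ y, (y, v) ∈ U := by
    intro v hv
    obtain ⟨⟨y, v'⟩, h, rfl⟩ := hv
    exact ⟨y, h⟩
  by_cases hD0 : D = ⊥
  · left
    rw [hD0, finrank_bot, add_zero] at hdim
    have hJi : Function.Injective J := by
      rw [← LinearMap.ker_eq_bot, LinearMap.ker_eq_bot']
      intro v hv
      by_contra hv0
      have := metsch_J hc hJ hv0 0 1 (by simp [hv])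
      simp at this
    let J' := LinearEquiv.ofInjectiveEndo J hJi
    have hJ' : finrank F (E.map (J'.symm : M × M →ₗ[F] M × M)) = finrank F E :=
      LinearEquiv.finrank_map_eq J'.symm E
    obtain ⟨v, hv0, hv1, hv2⟩ := metsch_meet E (E.map (J'.symm : M × M →ₗ[F] M × M)) (by
      rw [hJ', hdim, finrank_prod]; omega)
    obtain ⟨u, hu, huv⟩ := hv2
    have hJv : J v = u := by
      rw [← huv]
      exact J'.apply_symm_apply u
    obtain ⟨y, hy⟩ := hlift v hv1
    obtain ⟨z, hz⟩ := hlift u hu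
    refine ⟨(y, z, v), hv0, ?_⟩
    unfold metschL1
    rw [Submodule.span_le]
    rintro w (rfl | rfl)
    · exact hy
    · simpa [hJv] using hz
  · right
    obtain ⟨p1, hp1, hp10⟩ := Submodule.exists_mem_ne_zero_of_ne_bot hD0
    let g : M × D →ₗ[F] M × M := LinearMap.prodMap LinearMap.id (i.comp D.subtype)
    have hg : Function.Injective g := by
      rintro ⟨a, b⟩ ⟨a', b'⟩ h
      have h1 : a = a' := congrArg Prod.fst h
      have h2 : i b = i b' := congrArg Prod.snd h
      rw [h1, Subtype.ext (hi h2)]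
    have hA : finrank F (LinearMap.range g) = finrank F M + finrank F D := by
      rw [LinearMap.finrank_range_of_inj hg, finrank_prod]
    obtain ⟨v, hv0, hv1, hv2⟩ := metsch_meet E (LinearMap.range g) (by
      rw [hA, finrank_prod]; omega)
    obtain ⟨⟨a, p, hp⟩, rfl⟩ := hv2
    change ((a, i p) : M × M) ∈ E at hv1
    change ((a, i p) : M × M) ≠ 0 at hv0
    obtain ⟨y, hy⟩ := hlift _ hv1
    have fin : ∀ p' ∈ D, ∀ l : F, p' ≠ 0 → (a, l) ≠ (0 : M × F) → l • i p' = i p →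
        ∃ w : X × X × (M × F), w.1 ≠ 0 ∧ w.2.2 ≠ 0 ∧ metschL2 i w ≤ U := by
      intro p' hp' l h0 h1 h2
      refine ⟨(p', y, (a, l)), h0, h1, ?_⟩
      unfold metschL2
      rw [Submodule.span_le]
      rintro w (rfl | rfl)
      · exact hp'
      · simpa [h2] using hy
    by_cases hp0 : p = 0
    · subst hp0
      refine fin p1 hp1 0 hp10 ?_ (by simp)
      intro h
      apply hv0
      simpa using h
    · exact fin p hp 1 hp0 (by simp) (by simp)

end

/-- the multiplication operator -/
def metschJ (F M : Type) [Field F] [AddCommGroup M] [Module F M] (c : F) :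
    M × M →ₗ[F] M × M where
  toFun v := (c • v.2, v.1 + v.2)
  map_add' a b := by
    refine Prod.ext ?_ ?_
    · exact smul_add _ _ _
    · exact add_add_add_comm _ _ _ _
  map_smul' a b := by
    refine Prod.ext ?_ ?_
    · exact smul_comm _ _ _
    · exact (smul_add _ _ _).symm

lemma metsch_turan (F : Type) [Field F] [Fintype F] (x s : ℕ) (hxs : x ≤ s) :
    ∃ T : Finset (Submodule F ((Fin x → F) × ((Fin s → F) × (Fin s → F)))),
      (∀ L ∈ T, finrank F L = 2) ∧
      (∀ U : Submodule F ((Fin x → F) × ((Fin s → F) × (Fin s → F))), finrank F U = s + 1 →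
        ∃ L ∈ T, L ≤ U) ∧
      ∃ a b : ℕ, T.card ≤ a + b ∧
        (Fintype.card F ^ 2 - 1) * a ≤
          Fintype.card F ^ x * (Fintype.card F ^ x * (Fintype.card F ^ (2 * s) - 1)) ∧
        ((Fintype.card F - 1) * ((Fintype.card F - 1) * Fintype.card F)) * b ≤
          (Fintype.card F ^ x - 1) * (Fintype.card F ^ x * (Fintype.card F ^ (s + 1) - 1)) := by
  classical
  obtain ⟨c, hc⟩ := metsch_c F
  have hJ : ∀ v, metschJ F (Fin s → F) c (metschJ F (Fin s → F) c v) =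
      metschJ F (Fin s → F) c v + c • v := by
    intro v
    ext <;> simp [metschJ] <;> ring
  let i : (Fin x → F) →ₗ[F] (Fin s → F) :=
    Function.ExtendByZero.linearMap F (Fin.castLE hxs)
  have hi : Function.Injective i := by
    intro a b h
    funext j
    have := congrFun h (Fin.castLE hxs j)
    simpa [i, (Fin.castLE_injective hxs).extend_apply] using this
  have c1 := metschL1_card (X := Fin x → F) hc hJ
  have c2 := metschL2_card hi
  refine ⟨_ ∪ _, ?_, ?_, _, _, Finset.card_union_le _ _, c1.trans (le_of_eq ?_),
    c2.trans (le_of_eq ?_)⟩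
  · intro L hL
    rcases Finset.mem_union.1 hL with h | h
    · obtain ⟨w, hw, rfl⟩ := Finset.mem_image.1 h
      simp only [Finset.mem_product, Finset.mem_erase] at hw
      exact metschL1_rank hc hJ w hw.2.2.1
    · obtain ⟨w, hw, rfl⟩ := Finset.mem_image.1 h
      simp only [Finset.mem_product, Finset.mem_erase] at hw
      exact metschL2_rank hi w hw.1.1 hw.2.2.1
  · intro U hU
    rcases metsch_cover hc hJ hi U (by simpa using hU) with ⟨w, h1, h2⟩ | ⟨w, h1, h2, h3⟩
    · refine ⟨_, Finset.mem_union_left _ (Finset.mem_image_of_mem _ ?_), h2⟩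
      simp [h1]
    · refine ⟨_, Finset.mem_union_right _ (Finset.mem_image_of_mem _ ?_), h3⟩
      simp only [Finset.mem_product, Finset.mem_erase]
      simp [h1, h2]
  · simp [two_mul, pow_add]
  · simp [pow_succ]

lemma metsch_dual (F W : Type) [Field F] [AddCommGroup W] [Module F W] (x s : ℕ) (hx : 1 ≤ x)
    (e : W ≃ₗ[F] Dual F (Fin (2 * s + x) → F))
    (T : Finset (Submodule F W))
    (h2 : ∀ L ∈ T, finrank F L = 2)
    (hT : ∀ U : Submodule F W, finrank F U = s + 1 → ∃ L ∈ T, L ≤ U) :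
    coveringNumber F (2 * s + x) (2 * s + x - 2) (s + x - 1) ≤ T.card := by
  classical
  let S := T.image (fun L => (L.map (e : W →ₗ[F] Dual F (Fin (2 * s + x) → F))).dualCoannihilator)
  refine le_trans (Nat.sInf_le ⟨S, rfl, ?_, ?_⟩) Finset.card_image_le
  · intro Z hZ
    obtain ⟨L, hL, rfl⟩ := Finset.mem_image.1 hZ
    have a1 := Subspace.finrank_add_finrank_dualCoannihilator_eq
      (L.map (e : W →ₗ[F] Dual F (Fin (2 * s + x) → F)))
    have a2 : finrank F (L.map (e : W →ₗ[F] Dual F (Fin (2 * s + x) → F))) = 2 :=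
      (LinearEquiv.finrank_map_eq e L).trans (h2 L hL)
    rw [a2, finrank_fin_fun] at a1
    omega
  · intro Y hY
    have a1 := Subspace.finrank_add_finrank_dualAnnihilator_eq Y
    rw [hY, finrank_fin_fun] at a1
    have a3 : finrank F (Y.dualAnnihilator.map (e.symm : Dual F (Fin (2 * s + x) → F) →ₗ[F] W))
        = finrank F Y.dualAnnihilator := LinearEquiv.finrank_map_eq e.symm _
    obtain ⟨L, hL, hLU⟩ := hT
      (Y.dualAnnihilator.map (e.symm : Dual F (Fin (2 * s + x) → F) →ₗ[F] W)) (by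
        rw [a3]; omega)
    refine ⟨_, Finset.mem_image_of_mem _ hL, ?_⟩
    intro v hv
    rw [Submodule.mem_dualCoannihilator]
    rintro φ ⟨l, hl, rfl⟩
    obtain ⟨ψ, hψ, rfl⟩ := hLU hl
    rw [SetLike.mem_coe, Submodule.mem_dualAnnihilator] at hψ
    simpa using hψ v hv

/-- Metsch's construction upper bound. -/
theorem metsch_bound (q x s : ℕ) (hq : IsPrimePow q) (hx : 1 ≤ x) (hxs : x ≤ s)
    (F : Type) [Field F] [Fintype F] (hF : Fintype.card F = q) :
    (coveringNumber F (2 * s + x) (2 * s + x - 2) (s + x - 1) : ℚ) ≤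
      ((q : ℚ) ^ (2 * s + 2 * x) - (q : ℚ) ^ (2 * x)) / ((q : ℚ) ^ 2 - 1) +
        (((q : ℚ) ^ x - 1) / ((q : ℚ) - 1)) *
          (((q : ℚ) ^ (s + x) - (q : ℚ) ^ (x - 1)) / ((q : ℚ) - 1)) := by
  obtain ⟨T, h2, hT, a, b, hab, ha, hb⟩ := metsch_turan F x s hxs
  have e : ((Fin x → F) × ((Fin s → F) × (Fin s → F))) ≃ₗ[F] Dual F (Fin (2 * s + x) → F) :=
    LinearEquiv.ofFinrankEq _ _ (by simp [finrank_prod, Subspace.dual_finrank_eq]; omega)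
  have h1 := (metsch_dual F _ x s hx e T h2 hT).trans hab
  rw [hF] at ha hb
  have hq1 : 1 < q := hq.one_lt
  have hQ : (1 : ℚ) < q := by exact_mod_cast hq1
  have hp : ∀ n, 1 ≤ q ^ n := fun n => Nat.one_le_pow _ _ (by omega)
  have h1' : (coveringNumber F (2 * s + x) (2 * s + x - 2) (s + x - 1) : ℚ) ≤ a + b := by
    exact_mod_cast h1
  have ha' : ((q : ℚ) ^ 2 - 1) * a ≤ q ^ x * (q ^ x * (q ^ (2 * s) - 1)) := by
    have : (((q ^ 2 - 1) * a : ℕ) : ℚ) ≤ ((q ^ x * (q ^ x * (q ^ (2 * s) - 1)) : ℕ) : ℚ) := by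
      exact_mod_cast ha
    simpa [Nat.cast_sub (hp _)] using this
  have hb' : (((q : ℚ) - 1) * ((q - 1) * q)) * b ≤ (q ^ x - 1) * (q ^ x * (q ^ (s + 1) - 1)) := by
    have : ((((q - 1) * ((q - 1) * q)) * b : ℕ) : ℚ) ≤
        (((q ^ x - 1) * (q ^ x * (q ^ (s + 1) - 1)) : ℕ) : ℚ) := by
      exact_mod_cast hb
    simpa [Nat.cast_sub (hp _), Nat.cast_sub hq1.le] using this
  refine h1'.trans (add_le_add ?_ ?_)
  · rw [le_div_iff₀ (by nlinarith)]
    calc (a : ℚ) * ((q : ℚ) ^ 2 - 1) = ((q : ℚ) ^ 2 - 1) * a := by ring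
      _ ≤ _ := ha'
      _ = _ := by ring
  · have hq' : (0 : ℚ) < q - 1 := by linarith
    rw [div_mul_div_comm, le_div_iff₀ (by positivity)]
    obtain ⟨y, rfl⟩ : ∃ y, x = y + 1 := ⟨x - 1, by omega⟩
    have hq0 : (0 : ℚ) < q := by linarith
    refine le_of_mul_le_mul_right ?_ hq0
    calc (b : ℚ) * (((q : ℚ) - 1) * (q - 1)) * q = (((q : ℚ) - 1) * ((q - 1) * q)) * b := by ring
      _ ≤ _ := hb'
      _ = _ := by
        simp only [Nat.add_sub_cancel]
        ring
end

section
/- 𝒞_2(7, 3, 2) ≤ 396; that is, there exists a set of at most 396 three-dimensional F_2-subspaces of F_2^7 such that every two-dimensional F_2-subspace of F_2^7 is contained in at least one of them. -/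
open Module

namespace Cov732

/-- The planes of the covering: three generating vectors (as bit strings) and the
indicator bit mask of the eight vectors of the plane. -/
def planes : List (ℕ × ℕ × ℕ × ℕ) := [
  (1, 2, 8, 3855), (1, 2, 96, 1188422437713965063903159255055),
  (1, 2, 108, 4867778304876400901747340308643855), (1, 4, 24, 855638067),
  (1, 4, 26, 3422552115), (1, 6, 16, 12779715),
  (1, 6, 18, 3932355), (1, 12, 116, 4236914236564419344880885004643610627),
  (1, 12, 118, 16947656946257677379523540018574405635), (1, 14, 112, 255227352081279452080416547062813868035),
  (1, 14, 114, 63865251359978379830925104849407229955), (1, 32, 72, 60847228825122110720463574401027),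
  (1, 34, 74, 60847228867623409066329036029955), (1, 36, 78, 243388916150514409798545054892035),
  (1, 38, 76, 243388915470493636265934619410435), (1, 40, 66, 243388915244041406019550064934915),
  (1, 42, 64, 243388915243875385332782283620355), (1, 44, 68, 60847228811840455040156370468867),
  (1, 46, 70, 60847228814496786345100220301315), (1, 48, 84, 3803009829124030551115425644547),
  (1, 50, 86, 3803183914442057590991373729795), (1, 52, 82, 15211821709848601704309417050115),
  (1, 54, 80, 15211810829516265705043491028995), (1, 56, 94, 15271228324624667243937710211075),
  (1, 58, 92, 15226662483211042072387683090435), (1, 60, 88, 3803880255717611004210104500227),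
  (1, 62, 90, 3806665620816379403370089152515), (2, 4, 80, 102758694667243479850025045),
  (2, 4, 81, 205517389334486959700050005), (2, 5, 88, 51065026620521936339588874405),
  (2, 5, 89, 27853650883921056185230295205), (2, 12, 48, 5766014897917808645),
  (2, 12, 49, 11532029795835596805), (2, 13, 52, 743093938516172805),
  (2, 13, 53, 405323966463385605), (2, 16, 104, 6646241390972597622871155037658480645),
  (2, 17, 104, 13292381369897176987390190339060531205), (2, 20, 105, 212676682149682576181313369117373235205),
  (2, 21, 105, 106338442486889306349008804294950912005), (2, 24, 105, 52125792681384792989544435888947205),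
  (2, 25, 105, 26164308388710654846891954326732805), (2, 28, 104, 415485160730804468634559443936215045),
  (2, 29, 104, 830868909413590678916999151616000005), (2, 32, 68, 6338253002616886533401754992645),
  (2, 33, 69, 6338253004092626059319993958405), (2, 36, 65, 12676506002466761456047724953605),
  (2, 37, 64, 12676506002374527736022774579205), (2, 40, 77, 12676506757860931279607824384005),
  (2, 41, 76, 12676506380071612655533765427205), (2, 44, 72, 6338253024752979509792672317445),
  (2, 45, 73, 6338253048364812012101828608005), (3, 4, 72, 722522071879055717695641),
  (3, 4, 73, 481681381252703811797145), (3, 5, 64, 1936908127739502919785),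
  (3, 5, 65, 2767011611056432742505), (3, 12, 32, 158368329142281),
  (3, 12, 33, 105578886107145), (3, 13, 36, 7215545081865),
  (3, 13, 37, 10307921534985), (3, 16, 101, 498468104322944821715336627824951305),
  (3, 17, 101, 747698353532616547884800451627319305), (3, 20, 100, 46742080582215502721387937301266441),
  (3, 21, 100, 31165190006611019835796448310460425), (3, 24, 100, 191408842801883287752212830150849462281),
  (3, 25, 100, 127605899004207325852830091257342590985), (3, 28, 101, 7975375580613096606799251344317218825),
  (3, 29, 101, 11963059567967844225510672524352946185), (3, 48, 89, 121696314531968953147370646798345),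
  (3, 49, 88, 121697242986998416338151891009545), (3, 52, 92, 182586252274279348037818276380681),
  (3, 53, 93, 182571396993807909963720604778505), (3, 56, 80, 182541697313198058865534175281161),
  (3, 57, 81, 182541693686420383848864537378825), (3, 60, 85, 121694573678799081841625741131785),
  (3, 61, 84, 121694631707234964579312306487305), (4, 8, 99, 2769182736198567127569548152148241),
  (4, 9, 96, 690948805286899288153296790888977), (4, 10, 98, 350188478313048372163464260502545),
  (4, 11, 97, 1381897610573798576306593581795345), (4, 16, 40, 1224997790343561233),
  (4, 17, 43, 4900065928162705425), (4, 18, 41, 9799870172558000145),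
  (4, 19, 42, 2450032964089151505), (4, 32, 88, 22596875933604815006327586266101579793),
  (4, 33, 91, 90387503755464240693161809591662542865), (4, 34, 89, 180775007437271049048843492826827194385),
  (4, 35, 90, 45193751877732120346580905306932379665), (4, 48, 65, 176538093190184766564120455922319377),
  (4, 49, 67, 353076186380370787506837924094148625), (4, 50, 66, 88269046595093324082755748262576145),
  (4, 51, 64, 706152372760736871113077350668959761), (5, 8, 97, 366509479790986825707734314262817),
  (5, 9, 98, 1470791608914803163086549894042145), (5, 10, 96, 2679892597044991219101624120149025),
  (5, 11, 99, 675023944621532156296994456881185), (5, 16, 32, 9288815967535137),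
  (5, 17, 35, 37155006164631585), (5, 18, 33, 20266275641229345),
  (5, 19, 34, 5067116521193505), (5, 40, 82, 175458095443768473431491699291950415905),
  (5, 41, 81, 43864523860923984470578716105605382177), (5, 42, 83, 23926103924215528371280925521159913505),
  (5, 43, 80, 95704415696553837401121470267787313185), (5, 56, 75, 373845373814847602018862953410854945),
  (5, 57, 73, 171345796331734315635234725160812577), (5, 58, 72, 685383185326753094571562626755592225),
  (5, 59, 74, 93461343454250254877434497824981025), (6, 8, 96, 1323506454800785759500151690379585),
  (6, 9, 99, 408817318573603981982686783767105), (6, 10, 97, 821596045272921180845050764989505),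
  (6, 11, 98, 2638297811725002441865013546199105), (6, 24, 32, 4683743892728709185),
  (6, 25, 35, 1441152054738288705), (6, 26, 33, 2882304320198410305),
  (6, 27, 34, 9367487311501066305), (6, 40, 91, 207691886720793497995094070415851585),
  (6, 41, 88, 674998611726053230096536926420992065), (6, 42, 90, 337499301994463992281405626127482945),
  (6, 43, 89, 103845977403747829345512841271050305), (6, 48, 74, 26584559915698411905424094471997358145),
  (6, 49, 72, 172799639452039370431352896110356070465), (6, 50, 73, 53169119831397248823800684964625776705),
  (6, 51, 75, 86399819726019720633418032703099371585), (7, 8, 98, 733018959581973651415468628541825),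
  (7, 9, 97, 2621659897597006930970369316635265), (7, 10, 99, 1340540509741352592082763639694465),
  (7, 11, 96, 496998263451980189724301200464001), (7, 24, 40, 36452111159918721),
  (7, 25, 43, 10159488547946625), (7, 26, 41, 6827967812468865),
  (7, 27, 42, 18616931284156545), (7, 32, 81, 342691592743087727577578837309915265),
  (7, 33, 82, 124615124648357192590858845658546305), (7, 34, 80, 186922687063205225357385186007842945),
  (7, 35, 83, 669806294780006983751185229741555841), (7, 56, 64, 171470411456254149993516525915589312641),
  (7, 57, 66, 31901471898837981618529957306775371905), (7, 58, 67, 87729047721804448056967197132897386625),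
  (7, 59, 65, 47852207848256972643751545291833081985), (8, 16, 33, 144680345659310337),
  (8, 17, 34, 578716967377174785), (8, 18, 32, 289357379932520705),
  (8, 19, 35, 72347899602141441), (8, 20, 70, 1243079154610363166572413185),
  (8, 21, 69, 310845641664221885790945537), (8, 22, 71, 621994695374968146286870785),
  (8, 23, 68, 2485627338139308679028015361), (8, 36, 86, 5337681190458214683150788552910962945),
  (8, 37, 85, 1334420302585656641043083211204198657), (8, 38, 87, 2668840625055725163107587087975579905),
  (8, 39, 84, 10675362346118708574514196906512482561), (8, 52, 66, 85402898729180863798479936500665417985),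
  (8, 53, 64, 42701449364590427160162878963329270017), (8, 54, 65, 170805797458361699154395361549670678785),
  (8, 55, 67, 21350724682295249144282617286464897281), (9, 16, 36, 2310381861966250497),
  (9, 17, 39, 9241457353881158145), (9, 18, 37, 4647732545205830145),
  (9, 19, 38, 1162069716295483905), (9, 20, 64, 9922872590576586079526191617),
  (9, 21, 67, 39691471546627389132480971265), (9, 22, 65, 19961787892736727951964373505),
  (9, 23, 66, 4990483636088028486269141505), (9, 32, 83, 5358450359255553558485771723370136065),
  (9, 33, 80, 1339612590122164473623173927664615937), (9, 34, 82, 2663648290909082355285372496659874305),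
  (9, 35, 81, 10654593154025369155205157227040080385), (9, 48, 70, 170473490459416066343559080176005415425),
  (9, 49, 68, 21433801432031919861521866399011570177), (9, 50, 69, 85735205728127149951032678313321562625),
  (9, 51, 71, 42618372614854169767906941138320228865), (10, 16, 64, 1239167873017670456431412225),
  (10, 17, 67, 314330305406721914524795905), (10, 18, 65, 628679242024958275445064705),
  (10, 19, 66, 2478302726363448972665160705), (10, 20, 39, 146402723092235265),
  (10, 21, 36, 577094141870081025), (10, 22, 38, 288529718465004545),
  (10, 23, 37, 73324369417339905), (10, 32, 84, 85153668499797556549580062666732340225),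
  (10, 33, 87, 21599954941563145753880588267793941505), (10, 34, 85, 43199909902662532752733567506165269505),
  (10, 35, 86, 170307336964971477625397139198579835905), (10, 52, 70, 1349997183219131926489465295386706945),
  (10, 53, 68, 10644208559996699174322705547657217025), (10, 54, 69, 2699994366438715421212411667603784705),
  (10, 55, 71, 5322104279998351798496323807152702465), (11, 16, 70, 9981043863057451012566616065),
  (11, 17, 69, 39633726891996716879633844225), (11, 18, 71, 19845804173840719881156429825),
  (11, 19, 68, 5107107420109906127916369921), (11, 20, 34, 2323859626074834945),
  (11, 21, 33, 9227880044194433025), (11, 22, 35, 4620694352094562305),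
  (11, 23, 32, 1188959102290626561), (11, 36, 81, 85236745230948088240881378079933466625),
  (11, 37, 82, 21932261931074917625834035654957205505), (11, 38, 80, 42867602866540625905538188332264065025),
  (11, 39, 83, 170224260210524945390122071901215918081), (11, 48, 66, 2679225179003980575418420367286339585),
  (11, 49, 64, 5327296576856770944539689590756214785), (11, 50, 65, 1370766370653213420436711744896763905),
  (11, 51, 67, 10639016263137866680873731831745218561), (12, 16, 71, 2630662723596537476413460481),
  (12, 17, 68, 657660663384746320575205377), (12, 18, 70, 328847892992731332586246145),
  (12, 19, 69, 1315321326769492642224410625), (12, 20, 102, 85091447117909570695957075619094728705),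
  (12, 21, 102, 170182808035578325872314849462371487745), (12, 22, 102, 21272926429658004313688745236704006145),
  (12, 23, 102, 42545766659075193107778188697590042625), (12, 36, 64, 21550060279456210296600218570753),
  (12, 37, 65, 21550060355032520767756482646017), (12, 38, 66, 21550060506185141710069010796545),
  (12, 39, 67, 21550060808490383594694067097601), (12, 52, 81, 43110026345925798483539116691457),
  (12, 53, 80, 43105073376842913909004010786817), (12, 54, 83, 43139744160423794981492739805185),
  (12, 55, 82, 43119932284092256683352316186625), (13, 16, 65, 4954253603537964420225376257),
  (13, 17, 66, 19817316571819785041477771265), (13, 18, 64, 39619068094584823217974943745),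
  (13, 19, 67, 9905031619131513076412063745), (13, 20, 101, 21278055343986527729847200897836261377),
  (13, 21, 101, 42540510979686646868679583365976825857), (13, 22, 101, 85112152922813698595001122769371930625),
  (13, 23, 101, 170161975465614175150330652641934188545), (13, 32, 71, 91270843237683166115864701313025),
  (13, 33, 70, 91270843255392040409037979787265), (13, 34, 69, 91270843221745179341745649885185),
  (13, 35, 68, 91270843226172397849084377964545), (13, 48, 86, 167332432481459613218865992966145),
  (13, 49, 87, 167331271912671630534828644900865), (13, 50, 84, 167330517542968262019705829597185),
  (13, 51, 85, 167330227400766943948585379569665), (14, 16, 103, 3323120695486298811435577519902900225),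
  (14, 17, 103, 1661585700755153970305818695626276865), (14, 18, 103, 10800028171776450596519492233174728705),
  (14, 19, 103, 5400039438900229862847776051054526465), (14, 20, 65, 2515170204601724145463476225),
  (14, 21, 66, 773788156204064881109909505), (14, 22, 64, 387158512178329066930192385),
  (14, 23, 67, 1257434115700618760059633665), (14, 32, 69, 164794578068039049938260323221505),
  (14, 33, 68, 164794578048854436171975428685825), (14, 34, 71, 164794578041475738419354895663105),
  (14, 35, 70, 164794578035572780333377205059585), (14, 52, 80, 82417097264389589530289048141825),
  (14, 53, 81, 82436905513944267963292387917825), (14, 54, 82, 82402245610695421148894551097345),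
  (14, 55, 83, 82407202206555931200503393828865), (15, 16, 100, 10717064242943313666879737500371353601),
  (15, 17, 100, 5483229009540207417320997199443820545), (15, 18, 100, 2990926517443490155626358960881434625),
  (15, 19, 100, 1994005520604803250948503665403002881), (15, 20, 71, 4961438647248162437597265921),
  (15, 21, 68, 19809496554285081793319174145), (15, 22, 70, 39615300808276369882686193665),
  (15, 23, 69, 9908375497323242553203523585), (15, 36, 66, 45635421759405772890869612969985),
  (15, 37, 67, 45635421683921696136920800722945), (15, 38, 64, 45635422212697615007743513493505),
  (15, 39, 65, 45635421910484606847335295647745), (15, 48, 87, 30424078633001461307035795619841),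
  (15, 49, 86, 30424310746754215911293888528385), (15, 50, 85, 30424891031145325653238487220225),
  (15, 51, 84, 30426109628370345403841891041281), (16, 34, 78, 21267972470919655253209810093272530945),
  (16, 35, 66, 10384752178230460853422825456861185), (16, 38, 68, 20769504366132475851226279028260865),
  (16, 39, 73, 85071889805068229037162469705539190785), (16, 42, 69, 170143779608937185362313282230543253505),
  (16, 43, 72, 41539009003068467907242205751869441), (16, 46, 67, 42535944902234296345118018251257872385),
  (16, 47, 79, 5192415701383071158356975575695361), (17, 32, 65, 5192455316068818870871414259449857),
  (17, 33, 77, 42535620388622877632517863496801714177), (17, 36, 74, 170142481537159764406640135636319862785),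
  (17, 37, 71, 41538691858302291728675783879819265), (17, 40, 75, 20769822497417242990182253316931585),
  (17, 41, 70, 85073187878818626965232270150941671425), (17, 44, 76, 10384682848828043974027301118672897),
  (17, 45, 64, 21268296969668388691153409297564696577), (18, 34, 67, 41538533327021648770382497904328705),
  (18, 35, 79, 85070916258692399069763847512056397825), (18, 38, 72, 21268946008011232435024412607617695745),
  (18, 39, 69, 5192613925927979901371512583880705), (18, 42, 73, 10385230018259292747550022183419905),
  (18, 43, 68, 42537892013623946894483456607838797825), (18, 46, 78, 20769271614364214527876209102290945),
  (18, 47, 66, 170141832497577757587053444698640482305), (19, 32, 76, 170141508018637046973412233387109253121),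
  (19, 33, 64, 20769345900135764047584188009283585), (19, 36, 70, 10384910668406519169729083575107585),
  (19, 37, 75, 42536593939641464428600181114888781825), (19, 40, 71, 21270244081007266555148715566083604481),
  (19, 41, 74, 5192931302823851140085435886731265), (19, 44, 65, 85071240767346768468692554463142477825),
  (19, 45, 77, 41538473903632884197838994010537985), (20, 32, 67, 664614631872500703055733006453964801),
  (20, 33, 76, 2659105028986709166955258623495766017), (20, 36, 75, 10636420154322713433109035028038287361),
  (20, 37, 69, 83076828967138198256428239259959297), (20, 42, 68, 5318210057355506424101571090206162945),
  (20, 43, 74, 166153677736499039897047779538632705), (20, 46, 66, 1329552514415945626161203523217260545),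
  (20, 47, 77, 332307316478000161230045595135115265), (21, 34, 79, 1329877034130777228588589776008904705),
  (21, 35, 64, 332307632810214727033079153593155585), (21, 38, 70, 166153578710949585528103301581635585),
  (21, 39, 72, 5319508141472455942080145007788949505), (21, 40, 73, 83076913144651874765494075969765377),
  (21, 41, 71, 10635122040498798755752212761478692865), (21, 44, 78, 664614317281290303679050891671896065),
  (21, 45, 65, 2658780510142833022613812269207781377), (22, 32, 77, 10634473005862675031000249575537639425),
  (22, 33, 66, 166154133317757485164515798133243905), (22, 36, 68, 332307078179227480917779023296200705),
  (22, 37, 74, 2661052144950878206231583884159483905), (22, 42, 75, 664614166252341059348409776240328705),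
  (22, 43, 69, 1330526070009221578969518881776861185), (22, 46, 76, 83077067887222896335072467452166145),
  (22, 47, 67, 5317236501732007692287888045977370625), (23, 34, 65, 83077383639228645529020320662421505),
  (23, 35, 78, 5317561020866252596170891981901266945), (23, 38, 73, 1331824164021233360017685670961086465),
  (23, 39, 71, 664614077121831737719379212422348801), (23, 40, 70, 2659754065786884494168969856778502145),
  (23, 41, 72, 332307197016639980864966836034207745), (23, 44, 64, 10634148484987727933891134590833131521),
  (23, 45, 79, 166153816695854014189744200555167745), (24, 34, 76, 333605073180281046398874763619467265),
  (24, 35, 67, 1329228077488958613889318579978895361), (24, 36, 72, 83401268291429318122290169451118593),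
  (24, 37, 70, 10633824619911668908808705493061074945), (24, 42, 71, 166802576194514955883082724140908545),
  (24, 43, 73, 5316912300054740845047034208860504065), (24, 44, 77, 2658456150064993516295930461716217857),
  (24, 45, 66, 667210147559665463347567731685720065), (25, 32, 64, 2658456071416964298305501117668130817),
  (25, 33, 79, 665912072185067358796237338652442625), (25, 38, 69, 5316912621916724362390632759541366785),
  (25, 39, 75, 166478018031646397661767080632909825), (25, 40, 74, 10633824283201667336311219417895665665),
  (25, 41, 68, 83725796747394704941285305888014337), (25, 46, 65, 334903147684981428791149395175276545),
  (25, 47, 78, 1329228154396285637816213575055704065), (26, 34, 66, 5316912062677311089559944809513222145),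
  (26, 35, 77, 84374824106084569745860150861758465), (26, 36, 71, 2658456635298654540000284590141865985),
  (26, 37, 73, 332631517509568255465989868139577345), (26, 42, 72, 1329228312702406355606384693890514945),
  (26, 43, 70, 665263039951536127639183405302677505), (26, 44, 67, 168749648521352065161915848588263425),
  (26, 45, 76, 10633824124813098822114257832293433345), (27, 32, 78, 167451573726736049279141054234230785),
  (27, 33, 65, 10633824046745429573961892882980798465), (27, 38, 74, 664938516448553106589690707316834305),
  (27, 39, 68, 1329228669224297540451503839253626881), (27, 40, 69, 332956055860587040543665733662408705),
  (27, 41, 75, 2658456308483728507617570180137222145), (27, 46, 79, 5316912141615935796176622377725067265),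
  (27, 47, 64, 85672900641704752892902150189875201), (28, 34, 64, 85070592052099026103100953441299595265),
  (28, 35, 76, 44134523298830527749221833779445761), (28, 36, 69, 42535296024192603571461059275239981057),
  (28, 37, 72, 11033630843734044335059566923350017), (28, 40, 68, 5516815721678559329068599834836993),
  (28, 41, 73, 21267648011825511551694893829456920577), (28, 46, 77, 170141184094297100813169881820151414785),
  (28, 47, 65, 22067271552293368600177493581758465), (29, 32, 79, 23365335868846892822496078813200385),
  (29, 33, 67, 170141183797188922566037612591855960065), (29, 38, 75, 5841334043260713045757060431478785),
  (29, 39, 70, 21267648093490860254440200345227362305), (29, 42, 74, 42535295944500231841598800731060568065),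
  (29, 43, 71, 10709113508670482470489053540122625), (29, 44, 66, 42836488696993658855102229002584065),
  (29, 45, 78, 85070592364069889617970489956870651905), (30, 34, 77, 12980742156159592508616625727995905),
  (30, 35, 65, 21267648289085385319849763327499567105), (30, 36, 73, 42187412130347424413679002272661505),
  (30, 37, 68, 170141183620163497095225725248040075265), (30, 40, 72, 85070591809540154354947824087407263745),
  (30, 41, 69, 21093708463678406143507046957318145), (30, 46, 64, 6490390880209181548843437301694465),
  (30, 47, 76, 42535296498947519308179414796860391425), (31, 32, 66, 42535296191933478387272566840475254785),
  (31, 33, 78, 7788445290522329148614689301725185), (31, 38, 71, 85070591889000428265521029013678587905),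
  (31, 39, 74, 21418224580160679733346055470710785), (31, 42, 70, 41862894040908247998349580963938305),
  (31, 43, 75, 170141183539716774838001850731252940801), (31, 44, 79, 21267648566385767469307305050746388481),
  (31, 45, 67, 11682672883463666880828392440070145)]

/-- The bit mask of the plane spanned by `a`, `b`, `c`. -/
def mask (a b c : ℕ) : ℕ :=
  2 ^ 0 ||| 2 ^ a ||| 2 ^ b ||| 2 ^ c ||| 2 ^ (a ^^^ b) ||| 2 ^ (a ^^^ c) ||| 2 ^ (b ^^^ c)
    ||| 2 ^ (a ^^^ b ^^^ c)

/-- Validity of one entry. -/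
def good (p : ℕ × ℕ × ℕ × ℕ) : Bool :=
  Nat.beq p.2.2.2 (mask p.1 p.2.1 p.2.2.1) && Nat.blt p.1 128 && Nat.blt p.2.1 128
    && Nat.blt p.2.2.1 128 && Nat.blt 0 p.1 && Nat.blt 0 p.2.1 && Nat.blt 0 p.2.2.1
    && Nat.blt 0 (p.1 ^^^ p.2.1) && Nat.blt 0 (p.1 ^^^ p.2.2.1) && Nat.blt 0 (p.2.1 ^^^ p.2.2.1)
    && Nat.blt 0 (p.1 ^^^ p.2.1 ^^^ p.2.2.1)

/-- Union of all planes through the point `u`. -/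
def star (u : ℕ) : List (ℕ × ℕ × ℕ × ℕ) → ℕ
  | [] => 0
  | p :: l => cond (Nat.testBit p.2.2.2 u) (p.2.2.2 ||| star u l) (star u l)

theorem planes_length : planes.length = 395 := by decide +kernel

theorem planes_good : planes.all good = true := by decide +kernel

theorem planes_cover :
    (List.range 127).all (fun k => Nat.beq (star (k + 1) planes) (2 ^ 128 - 1)) = true := by
  decide +kernel

theorem star_spec (u v : ℕ) (l : List (ℕ × ℕ × ℕ × ℕ)) (h : (star u l).testBit v = true) :
    ∃ p ∈ l, p.2.2.2.testBit u = true ∧ p.2.2.2.testBit v = true := by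
  induction l with
  | nil => simp [star] at h
  | cons p l ih =>
    by_cases hp : p.2.2.2.testBit u = true
    · rw [star, hp, cond_true, Nat.testBit_or, Bool.or_eq_true] at h
      rcases h with h | h
      · exact ⟨p, by simp, hp, h⟩
      · obtain ⟨q, hq, h2⟩ := ih h
        exact ⟨q, by simp [hq], h2⟩
    · rw [star, Bool.eq_false_iff.mpr hp, cond_false] at h
      obtain ⟨q, hq, h2⟩ := ih h
      exact ⟨q, by simp [hq], h2⟩

/-- The vector of `F_2^7` with bit string `x`. -/
def vec (x : ℕ) : Fin 7 → ZMod 2 := fun i => if x.testBit i then 1 else 0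

theorem vec_xor (x y : ℕ) : vec (x ^^^ y) = vec x + vec y := by
  ext i
  simp only [vec, Pi.add_apply, Nat.testBit_xor]
  cases x.testBit i <;> cases y.testBit i <;> decide

theorem vec_zero : vec 0 = 0 := by
  ext i
  simp [vec]

theorem vec_ne_zero (x : ℕ) (hx : x < 128) (h0 : 0 < x) : vec x ≠ 0 := by
  intro h
  apply h0.ne'
  apply Nat.eq_of_testBit_eq
  intro i
  rw [Nat.zero_testBit]
  by_cases hi : i < 7
  · have := congrFun h ⟨i, hi⟩
    by_contra hc
    simp [vec] at this
    simp [this] at hc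
  · apply Nat.testBit_lt_two_pow
    calc x < 2 ^ 7 := hx
      _ ≤ 2 ^ i := Nat.pow_le_pow_right (by norm_num) (by omega)

theorem exists_vec (y : Fin 7 → ZMod 2) : ∃ x < 128, vec x = y := by
  have hinj : Function.Injective (fun x : Fin 128 => vec x) := by
    intro a b hab
    by_contra hne
    have h0 : vec (a.1 ^^^ b.1) = 0 := by
      rw [vec_xor]
      have : vec a.1 = vec b.1 := hab
      rw [this]
      ext i
      exact CharTwo.add_self_eq_zero _
    refine vec_ne_zero _ (Nat.xor_lt_two_pow (n := 7) a.2 b.2) ?_ h0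
    rw [Nat.pos_iff_ne_zero]
    intro h
    exact hne (Fin.ext (Nat.xor_eq_zero_iff.mp h))
  have hb : Function.Bijective (fun x : Fin 128 => vec x) := by
    rw [Fintype.bijective_iff_injective_and_card]
    exact ⟨hinj, by simp [ZMod.card]⟩
  obtain ⟨x, hx⟩ := hb.2 y
  exact ⟨x, x.2, hx⟩

/-- The plane of an entry. -/
def plane (p : ℕ × ℕ × ℕ × ℕ) : Submodule (ZMod 2) (Fin 7 → ZMod 2) :=
  Submodule.span (ZMod 2) (Set.range ![vec p.1, vec p.2.1, vec p.2.2.1])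

theorem mem_plane (p : ℕ × ℕ × ℕ × ℕ) (hp : good p = true) (u : ℕ)
    (hu : p.2.2.2.testBit u = true) : vec u ∈ plane p := by
  obtain ⟨a, b, c, m⟩ := p
  have hm : m = mask a b c := by
    simp only [good, Bool.and_eq_true] at hp
    exact Nat.eq_of_beq_eq_true (by tauto)
  have ha : vec a ∈ plane (a, b, c, m) := Submodule.subset_span ⟨0, rfl⟩
  have hb : vec b ∈ plane (a, b, c, m) := Submodule.subset_span ⟨1, rfl⟩
  have hc : vec c ∈ plane (a, b, c, m) := Submodule.subset_span ⟨2, rfl⟩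
  generalize plane (a, b, c, m) = X at *
  simp only [hm, mask, Nat.testBit_or, Nat.testBit_two_pow, Bool.or_eq_true,
    decide_eq_true_eq] at hu
  rcases hu with ((((((h | h) | h) | h) | h) | h) | h) | h <;> subst h
  · rw [vec_zero]; exact X.zero_mem
  · exact ha
  · exact hb
  · exact hc
  · rw [vec_xor]; exact X.add_mem ha hb
  · rw [vec_xor]; exact X.add_mem ha hc
  · rw [vec_xor]; exact X.add_mem hb hc
  · rw [vec_xor, vec_xor]; exact X.add_mem (X.add_mem ha hb) hc

theorem zmod_two_cases : ∀ x : ZMod 2, x = 0 ∨ x = 1 := by decide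

theorem finrank_plane (p : ℕ × ℕ × ℕ × ℕ) (hp : good p = true) :
    finrank (ZMod 2) (plane p) = 3 := by
  obtain ⟨a, b, c, m⟩ := p
  simp only [good, Bool.and_eq_true, Nat.blt_eq] at hp
  obtain ⟨⟨⟨⟨⟨⟨⟨⟨⟨⟨-, ha⟩, hb⟩, hc⟩, a0⟩, b0⟩, c0⟩, ab0⟩, ac0⟩, bc0⟩, abc0⟩ := hp
  have hab : a ^^^ b < 128 := Nat.xor_lt_two_pow (n := 7) ha hb
  have hac : a ^^^ c < 128 := Nat.xor_lt_two_pow (n := 7) ha hc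
  have hbc : b ^^^ c < 128 := Nat.xor_lt_two_pow (n := 7) hb hc
  have habc : a ^^^ b ^^^ c < 128 := Nat.xor_lt_two_pow (n := 7) hab hc
  have h1 := vec_ne_zero _ ha a0
  have h2 := vec_ne_zero _ hb b0
  have h3 := vec_ne_zero _ hc c0
  have h4 := vec_ne_zero _ hab ab0
  have h5 := vec_ne_zero _ hac ac0
  have h6 := vec_ne_zero _ hbc bc0
  have h7 := vec_ne_zero _ habc abc0
  simp only [vec_xor] at h4 h5 h6 h7
  have hli : LinearIndependent (ZMod 2) ![vec a, vec b, vec c] := by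
    rw [Fintype.linearIndependent_iff]
    intro g hg
    simp only [Fin.sum_univ_three, Matrix.cons_val_zero, Matrix.cons_val_one,
      Matrix.cons_val] at hg
    rw [Fin.forall_fin_succ, Fin.forall_fin_two]
    change g 0 = 0 ∧ g 1 = 0 ∧ g 2 = 0
    rcases zmod_two_cases (g 0) with g0 | g0 <;> rcases zmod_two_cases (g 1) with g1 | g1 <;>
      rcases zmod_two_cases (g 2) with g2 | g2 <;>
      simp only [g0, g1, g2, zero_smul, one_smul, zero_add, add_zero] at hg ⊢ <;>
      first | exact absurd hg (by assumption) | simp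
  have := finrank_span_eq_card hli
  rw [Fintype.card_fin] at this
  exact this

end Cov732

/-- $\mathcal{C}_2(7,3,2) \le 396$. -/
theorem bound_7_3_2 : coveringNumber (ZMod 2) 7 3 2 ≤ 396 := by
  classical
  have hgood : ∀ p ∈ Cov732.planes, Cov732.good p = true :=
    List.all_eq_true.mp Cov732.planes_good
  let S : Finset (Submodule (ZMod 2) (Fin 7 → ZMod 2)) :=
    (Cov732.planes.map Cov732.plane).toFinset
  have hcard : S.card ≤ 396 := by
    refine (List.toFinset_card_le _).trans ?_
    rw [List.length_map, Cov732.planes_length]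
    norm_num
  refine le_trans (Nat.sInf_le ⟨S, rfl, ?_, ?_⟩) hcard
  · intro X hX
    simp only [S, List.mem_toFinset, List.mem_map] at hX
    obtain ⟨p, hp, rfl⟩ := hX
    exact Cov732.finrank_plane p (hgood p hp)
  · intro Y hY
    let b := finBasisOfFinrankEq (ZMod 2) Y hY
    obtain ⟨u, hu, hu'⟩ := Cov732.exists_vec (b 0 : Fin 7 → ZMod 2)
    obtain ⟨v, hv, hv'⟩ := Cov732.exists_vec (b 1 : Fin 7 → ZMod 2)
    have hu0 : u ≠ 0 := by
      rintro rfl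
      rw [Cov732.vec_zero] at hu'
      exact b.ne_zero 0 (Subtype.ext hu'.symm)
    have hc := List.all_eq_true.mp Cov732.planes_cover (u - 1) (by simp; omega)
    have hc' := Nat.eq_of_beq_eq_true hc
    rw [Nat.sub_add_cancel (Nat.pos_of_ne_zero hu0)] at hc'
    obtain ⟨p, hp, hpu, hpv⟩ := Cov732.star_spec u v Cov732.planes (by
      rw [hc', Nat.testBit_two_pow_sub_one]
      simpa using hv)
    refine ⟨Cov732.plane p, by
      simp only [S, List.mem_toFinset, List.mem_map]; exact ⟨p, hp, rfl⟩, ?_⟩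
    have m0 := Cov732.mem_plane p (hgood p hp) u hpu
    have m1 := Cov732.mem_plane p (hgood p hp) v hpv
    rw [hu'] at m0
    rw [hv'] at m1
    intro y hy
    have hs := b.sum_repr ⟨y, hy⟩
    rw [Fin.sum_univ_two] at hs
    have hs' := congrArg Subtype.val hs
    simp only [Submodule.coe_add, Submodule.coe_smul] at hs'
    rw [← hs']
    exact Submodule.add_mem _ (Submodule.smul_mem _ _ m0) (Submodule.smul_mem _ _ m1)
end

section
/- 𝒞_2(8, 4, 3) ≤ 6897; that is, there exists a set of at most 6897 four-dimensional F_2-subspaces of F_2^8 such that every three-dimensional F_2-subspace of F_2^8 is contained in at least one of them. -/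
open Module

namespace QCov


abbrev F := ZMod 2
abbrev E := GaloisField 2 4

noncomputable instance : Fintype E := Fintype.ofFinite E

lemma finrankE : finrank F E = 4 := GaloisField.finrank 2 (by norm_num)

lemma cardE : Fintype.card E = 16 := by
  rw [← Nat.card_eq_fintype_card, GaloisField.card 2 4 (by norm_num)]; norm_num

noncomputable def e : E ≃ₗ[F] (Fin 4 → F) :=
  LinearEquiv.ofFinrankEq _ _ (by rw [finrankE]; simp)

noncomputable def enc (n : ℕ) : E :=
  e.symm (fun i : Fin 4 => if n.testBit i then 1 else 0)

lemma enc_xor (a b : ℕ) : enc (a ^^^ b) = enc a + enc b := by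
  unfold enc
  rw [← map_add]
  congr 1
  ext i
  simp only [Nat.testBit_xor, Pi.add_apply]
  cases a.testBit i <;> cases b.testBit i <;> decide

lemma enc_zero : enc 0 = 0 := by
  unfold enc
  rw [LinearEquiv.map_eq_zero_iff]
  ext i; simp

lemma bits_inj : ∀ n m : Fin 16, (∀ i : Fin 4, (n : ℕ).testBit i = (m : ℕ).testBit i) → n = m := by
  decide +kernel

lemma enc_inj (n m : Fin 16) (h : enc n = enc m) : n = m := by
  apply bits_inj
  intro i
  have h2 := congrFun (e.symm.injective h) i
  revert h2
  cases (n : ℕ).testBit i <;> cases (m : ℕ).testBit i <;> simp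

lemma enc_surj (x : E) : ∃ n : Fin 16, enc n = x := by
  have h : Function.Bijective (fun n : Fin 16 => enc n) := by
    rw [Fintype.bijective_iff_injective_and_card]
    exact ⟨fun a b => enc_inj a b, by rw [cardE]; rfl⟩
  exact h.2 x

/-- A packing of PG(3,2): seven spreads with five lines each. -/
def L : Fin 7 → Fin 5 → ℕ × ℕ :=
  ![![(1, 2), (4, 8), (5, 10), (6, 11), (7, 9)],
    ![(1, 4), (2, 8), (3, 13), (6, 9), (7, 11)],
    ![(1, 6), (2, 9), (3, 12), (4, 10), (5, 8)],
    ![(1, 8), (2, 12), (3, 5), (4, 11), (7, 10)],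
    ![(1, 10), (2, 13), (3, 4), (5, 9), (6, 8)],
    ![(1, 12), (2, 4), (3, 9), (5, 11), (7, 8)],
    ![(1, 14), (2, 5), (3, 8), (4, 9), (6, 10)]]

def combN (i : Fin 7) (j : Fin 5) (c d : Fin 2) : ℕ :=
  (c.val * (L i j).1) ^^^ (d.val * (L i j).2)

lemma factN1 : ∀ (i : Fin 7) (x : Fin 16), ∃ (j : Fin 5) (c d : Fin 2), combN i j c d = x := by
  decide +kernel

lemma factN2 : ∀ (x y : Fin 16), ∃ (i : Fin 7) (j : Fin 5),
    (∃ (c d : Fin 2), combN i j c d = x) ∧ (∃ (c d : Fin 2), combN i j c d = y) := by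
  decide +kernel

lemma factN3 : ∀ (i : Fin 7) (j : Fin 5) (y : Fin 16), ∃ (c d c' d' : Fin 2),
    combN i j c d ^^^ combN i (j+1) c' d' = y := by
  decide +kernel

lemma factN4 : ∀ (i : Fin 7) (j : Fin 5) (c d : Fin 2),
    combN i j c d < 16 ∧ (combN i j c d = 0 → c = 0 ∧ d = 0) := by
  decide +kernel

noncomputable def comb (i : Fin 7) (j : Fin 5) (c d : F) : E :=
  c • enc (L i j).1 + d • enc (L i j).2

lemma enc_mul (c : F) (a : ℕ) : enc ((show Fin 2 from c).val * a) = c • enc a := by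
  have h : ∀ c : F, c = 0 ∨ c = 1 := by decide
  rcases h c with rfl | rfl
  · rw [zero_smul]
    change enc (0 * a) = 0
    rw [zero_mul, enc_zero]
  · rw [one_smul]
    change enc (1 * a) = _
    rw [one_mul]

lemma enc_comb (i : Fin 7) (j : Fin 5) (c d : F) : enc (combN i j c d) = comb i j c d := by
  unfold combN comb
  rw [enc_xor]
  exact congrArg₂ _ (enc_mul c _) (enc_mul d _)

lemma fact1 (i : Fin 7) (x : E) : ∃ j c d, comb i j c d = x := by
  obtain ⟨n, rfl⟩ := enc_surj x
  obtain ⟨j, c, d, h⟩ := factN1 i n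
  exact ⟨j, c, d, (enc_comb i j c d).symm.trans (congrArg enc h)⟩

lemma fact2 (x y : E) : ∃ i j, (∃ c d, comb i j c d = x) ∧ (∃ c d, comb i j c d = y) := by
  obtain ⟨n, rfl⟩ := enc_surj x
  obtain ⟨m, rfl⟩ := enc_surj y
  obtain ⟨i, j, ⟨c, d, h⟩, ⟨c', d', h'⟩⟩ := factN2 n m
  exact ⟨i, j, ⟨c, d, (enc_comb i j c d).symm.trans (congrArg enc h)⟩,
    ⟨c', d', (enc_comb i j c' d').symm.trans (congrArg enc h')⟩⟩

lemma fact3 (i : Fin 7) (j : Fin 5) (y : E) :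
    ∃ c d c' d', comb i j c d + comb i (j+1) c' d' = y := by
  obtain ⟨n, rfl⟩ := enc_surj y
  obtain ⟨c, d, c', d', h⟩ := factN3 i j n
  refine ⟨c, d, c', d', ?_⟩
  refine (congrArg₂ (· + ·) (enc_comb i j c d) (enc_comb i (j+1) c' d')).symm.trans ?_
  exact (enc_xor _ _).symm.trans (congrArg enc h)

lemma fact4 (i : Fin 7) (j : Fin 5) (c d : F) (h : comb i j c d = 0) : c = 0 ∧ d = 0 := by
  rw [← enc_comb, ← enc_zero] at h
  obtain ⟨h1, h2⟩ := factN4 i j c d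
  have := enc_inj ⟨_, h1⟩ 0 h
  exact h2 (congrArg Fin.val this)

lemma comb_add (i : Fin 7) (j : Fin 5) (c d c' d' : F) :
    comb i j (c + c') (d + d') = comb i j c d + comb i j c' d' := by
  unfold comb; module

lemma comb_smul (i : Fin 7) (j : Fin 5) (r c d : F) :
    comb i j (r * c) (r * d) = r • comb i j c d := by
  unfold comb; module

/-- The line as a subspace. -/
noncomputable def U (i : Fin 7) (j : Fin 5) : Submodule F E where
  carrier := {x | ∃ c d, comb i j c d = x}
  add_mem' := by
    rintro _ _ ⟨c, d, rfl⟩ ⟨c', d', rfl⟩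
    exact ⟨_, _, comb_add ..⟩
  zero_mem' := ⟨0, 0, by simp [comb]⟩
  smul_mem' := by
    rintro r _ ⟨c, d, rfl⟩
    exact ⟨_, _, comb_smul ..⟩

lemma exists_le_U_two (X : Submodule F E) (h : finrank F X = 2) : ∃ i j, X ≤ U i j := by
  let b := Module.finBasisOfFinrankEq F X h
  obtain ⟨i, j, h0, h1⟩ := fact2 (b 0) (b 1)
  refine ⟨i, j, fun x hx => ?_⟩
  have := congrArg Subtype.val (b.sum_repr ⟨x, hx⟩)
  rw [Fin.sum_univ_two] at this
  rw [← show _ = x from this]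
  exact (U i j).add_mem ((U i j).smul_mem _ h0) ((U i j).smul_mem _ h1)

lemma exists_le_U_one (i : Fin 7) (X : Submodule F E) (h : finrank F X = 1) : ∃ j, X ≤ U i j := by
  let b := Module.finBasisOfFinrankEq F X h
  obtain ⟨j, h0⟩ := fact1 i (b 0)
  refine ⟨j, fun x hx => ?_⟩
  have := congrArg Subtype.val (b.sum_repr ⟨x, hx⟩)
  rw [Fin.sum_univ_one] at this
  rw [← show _ = x from this]
  exact (U i j).smul_mem _ h0

/-- Linearized polynomials `a x + b x^2 + c x^4`, linear in the coefficients too. -/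
noncomputable def g : (E × E × E) →ₗ[F] E →ₗ[F] E :=
  LinearMap.mk₂ F (fun p x => p.1 * x + p.2.1 * x ^ 2 + p.2.2 * x ^ 4)
    (fun p q x => by simp only [Prod.fst_add, Prod.snd_add]; ring)
    (fun r p x => by
      simp only [Prod.smul_fst, Prod.smul_snd, smul_mul_assoc, smul_add])
    (fun p x y => by
      have h2 : (x + y) ^ 2 = x ^ 2 + y ^ 2 := add_pow_char x y 2
      have h4 : (x + y) ^ 4 = x ^ 4 + y ^ 4 := by
        have h22 : (x ^ 2 + y ^ 2) ^ 2 = (x ^ 2) ^ 2 + (y ^ 2) ^ 2 := add_pow_char _ _ 2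
        calc (x + y) ^ 4 = ((x + y) ^ 2) ^ 2 := by ring
          _ = x ^ 4 + y ^ 4 := by rw [h2, h22]; ring
      rw [h2, h4]; ring)
    (fun r p x => by
      have h : ∀ r : F, r = 0 ∨ r = 1 := by decide
      rcases h r with rfl | rfl <;> simp)

lemma g_apply (p : E × E × E) (x : E) :
    g p x = p.1 * x + p.2.1 * x ^ 2 + p.2.2 * x ^ 4 := rfl

lemma g_inj (A : Submodule F E) (hA : finrank F A = 3) (p : E × E × E)
    (h : ∀ x ∈ A, g p x = 0) : p = 0 := by
  classical
  obtain ⟨a, b, c⟩ := p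
  let P : Polynomial E := Polynomial.C a * Polynomial.X + Polynomial.C b * Polynomial.X ^ 2
    + Polynomial.C c * Polynomial.X ^ 4
  have hcard : Nat.card A = 8 := by
    rw [Module.natCard_eq_pow_finrank (K := F), hA]; simp
  have hP : P = 0 := by
    refine Polynomial.eq_zero_of_natDegree_lt_card_of_eval_eq_zero' P
      (Finset.univ.filter (fun x => x ∈ A)) ?_ ?_
    · intro x hx
      have := h x (by simpa using hx)
      rw [g_apply] at this
      simpa [P] using this
    · have h8 : (Finset.univ.filter (fun x => x ∈ A)).card = 8 := by
        rw [← hcard, ← Fintype.card_subtype, ← Nat.card_eq_fintype_card]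
      rw [h8]
      have : P.natDegree ≤ 4 := by
        unfold P
        compute_degree
      omega
  have h1 : P.coeff 1 = a := by simp [P, Polynomial.coeff_X_pow]
  have h2 : P.coeff 2 = b := by simp [P, Polynomial.coeff_X_pow]
  have h4 : P.coeff 4 = c := by simp [P, Polynomial.coeff_X_pow]
  rw [hP] at h1 h2 h4
  simp only [Polynomial.coeff_zero] at h1 h2 h4
  rw [← h1, ← h2, ← h4]; rfl

lemma g_surj (A : Submodule F E) (hA : finrank F A = 3) (f : A →ₗ[F] E) :
    ∃ p, ∀ x : A, g p x = f x := by
  let R : (E × E × E) →ₗ[F] (A →ₗ[F] E) := (LinearMap.lcomp F E A.subtype).comp g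
  have hinj : Function.Injective R := by
    rw [← LinearMap.ker_eq_bot, LinearMap.ker_eq_bot']
    intro p hp
    exact g_inj A hA p (fun x hx => LinearMap.congr_fun hp ⟨x, hx⟩)
  have hs : Function.Surjective R := by
    refine (LinearMap.injective_iff_surjective_of_finrank_eq_finrank ?_).1 hinj
    rw [Module.finrank_linearMap, hA, Module.finrank_prod, Module.finrank_prod, finrankE]
  obtain ⟨p, hp⟩ := hs f
  exact ⟨p, fun x => LinearMap.congr_fun hp x⟩

abbrev Idx := (E × E × E) ⊕ (Unit ⊕ (Fin 7 × Fin 5 × Fin 5 × (F × F × F × F)))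

/-- The map giving the block with `T ∩ S = U i j`, projection `U i k`. -/
noncomputable def T (i : Fin 7) (j k : Fin 5) (s t : E) : (F × F × F × F) →ₗ[F] E × E where
  toFun v := (comb i k v.1 v.2.1, v.1 • s + v.2.1 • t + comb i j v.2.2.1 v.2.2.2)
  map_add' v w := by
    simp only [Prod.fst_add, Prod.snd_add, comb_add, Prod.mk_add_mk, Prod.mk.injEq, true_and]
    module
  map_smul' r v := by
    simp only [Prod.smul_fst, Prod.smul_snd, smul_eq_mul, comb_smul, Prod.smul_mk,
      RingHom.id_apply, Prod.mk.injEq, true_and]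
    module

lemma T_inj (i : Fin 7) (j k : Fin 5) (s t : E) : Function.Injective (T i j k s t) := by
  rw [← LinearMap.ker_eq_bot, LinearMap.ker_eq_bot']
  rintro ⟨a, b, c, d⟩ h
  have h1 : comb i k a b = 0 := congrArg Prod.fst h
  have h2 : a • s + b • t + comb i j c d = 0 := congrArg Prod.snd h
  obtain ⟨rfl, rfl⟩ := fact4 _ _ _ _ h1
  rw [zero_smul, zero_smul, zero_add, zero_add] at h2
  obtain ⟨rfl, rfl⟩ := fact4 _ _ _ _ h2
  rfl

noncomputable def block : Idx → Submodule F (E × E)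
  | .inl p => LinearMap.range (LinearMap.id.prod (g p))
  | .inr (.inl _) => LinearMap.range (LinearMap.inr F E E)
  | .inr (.inr (i, j, k, m)) =>
      LinearMap.range (T i j k (comb i (j+1) m.1 m.2.1) (comb i (j+1) m.2.2.1 m.2.2.2))

lemma finrank_block (x : Idx) : finrank F (block x) = 4 := by
  rcases x with p | _ | ⟨i, j, k, m⟩
  · refine (LinearMap.finrank_range_of_inj (f := LinearMap.id.prod (g p)) ?_).trans finrankE
    intro x y h
    exact congrArg Prod.fst h
  · exact (LinearMap.finrank_range_of_inj (f := LinearMap.inr F E E)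
      LinearMap.inr_injective).trans finrankE
  · refine (LinearMap.finrank_range_of_inj (T_inj i j k _ _)).trans ?_
    simp

lemma card_Idx : Fintype.card Idx = 6897 := by
  simp only [Fintype.card_sum, Fintype.card_prod, cardE, Fintype.card_fin, ZMod.card,
    Fintype.card_unit]

lemma exists_section (P : Submodule F (E × E)) :
    ∃ h : E →ₗ[F] E, ∀ v ∈ P, ((v.1, h v.1) : E × E) ∈ P := by
  let f : P →ₗ[F] E := (LinearMap.fst F E E).comp P.subtype
  obtain ⟨q, hq⟩ := f.rangeRestrict.exists_rightInverse_of_surjective (LinearMap.range_rangeRestrict f)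
  obtain ⟨h, hh⟩ := LinearMap.exists_extend ((LinearMap.snd F E E).comp (P.subtype.comp q))
  refine ⟨h, fun v hv => ?_⟩
  let w : LinearMap.range f := ⟨v.1, ⟨⟨v, hv⟩, rfl⟩⟩
  have h1 : h v.1 = (q w : E × E).2 := LinearMap.congr_fun hh w
  have h2 : (q w : E × E).1 = v.1 := congrArg Subtype.val (LinearMap.congr_fun hq w)
  rw [h1, ← h2]
  exact (q w).2

lemma cover_mid (P : Submodule F (E × E)) (i : Fin 7) (j k : Fin 5)
    (hk : P.map (LinearMap.fst F E E) ≤ U i k)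
    (hj : P.comap (LinearMap.inr F E E) ≤ U i j) : ∃ x, P ≤ block x := by
  obtain ⟨h, hh⟩ := exists_section P
  obtain ⟨c1, d1, c1', d1', e1⟩ := fact3 i j (h (enc (L i k).1))
  obtain ⟨c2, d2, c2', d2', e2⟩ := fact3 i j (h (enc (L i k).2))
  refine ⟨.inr (.inr (i, j, k, (c1', d1', c2', d2'))), fun v hv => ?_⟩
  obtain ⟨a, b, hab⟩ := hk ⟨v, hv, rfl⟩
  have hy : v.2 - h v.1 ∈ U i j := by
    apply hj
    have := P.sub_mem hv (hh v hv)
    rw [Submodule.mem_comap]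
    convert this using 1
    ext <;> simp
  obtain ⟨c, d, hcd⟩ := hy
  refine ⟨(a, b, a * c1 + b * c2 + c, a * d1 + b * d2 + d), ?_⟩
  have hab' : comb i k a b = v.1 := hab
  refine Prod.ext hab' ?_
  change a • _ + b • _ + comb i j _ _ = v.2
  have h3 : v.2 = comb i j c d + h v.1 := by rw [hcd]; abel
  rw [h3, ← hab', comb_add, comb_add, comb_smul, comb_smul]
  have h4 : h (comb i k a b) = a • h (enc (L i k).1) + b • h (enc (L i k).2) := by
    unfold comb; rw [map_add, map_smul, map_smul]
  rw [h4, ← e1, ← e2]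
  module

lemma cover (P : Submodule F (E × E)) (hP : finrank F P = 3) : ∃ x, P ≤ block x := by
  let f : P →ₗ[F] E := (LinearMap.fst F E E).comp P.subtype
  have hr : LinearMap.range f = P.map (LinearMap.fst F E E) := by
    rw [LinearMap.range_comp, Submodule.range_subtype]
  have hker : finrank F (LinearMap.ker f) = finrank F (P.comap (LinearMap.inr F E E)) := by
    have hm : (P.comap (LinearMap.inr F E E)).map (LinearMap.inr F E E)
        = (LinearMap.ker f).map P.subtype := by
      ext ⟨x, y⟩
      simp only [Submodule.mem_map, Submodule.mem_comap, LinearMap.mem_ker]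
      constructor
      · rintro ⟨z, hz, hz'⟩
        refine ⟨⟨_, hz⟩, rfl, hz'⟩
      · rintro ⟨⟨⟨x', y'⟩, hz⟩, h1, h2⟩
        have h1' : x' = 0 := h1
        subst h1'
        exact ⟨y', hz, h2⟩
    rw [(Submodule.equivMapOfInjective P.subtype P.injective_subtype _).finrank_eq, ← hm]
    exact (Submodule.equivMapOfInjective (LinearMap.inr F E E)
      LinearMap.inr_injective _).finrank_eq.symm
  have hsum := LinearMap.finrank_range_add_finrank_ker f
  rw [hr, hker, hP] at hsum
  obtain h | h | h | h : finrank F (P.map (LinearMap.fst F E E)) = 0 ∨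
    finrank F (P.map (LinearMap.fst F E E)) = 1 ∨ finrank F (P.map (LinearMap.fst F E E)) = 2 ∨
    finrank F (P.map (LinearMap.fst F E E)) = 3 := by omega
  · refine ⟨.inr (.inl ()), fun v hv => ⟨v.2, ?_⟩⟩
    have h0 := Submodule.finrank_eq_zero.1 h
    have : v.1 ∈ P.map (LinearMap.fst F E E) := ⟨v, hv, rfl⟩
    rw [h0, Submodule.mem_bot] at this
    exact Prod.ext this.symm rfl
  · obtain ⟨i, j, hj⟩ := exists_le_U_two (P.comap (LinearMap.inr F E E)) (by omega)
    obtain ⟨k, hk⟩ := exists_le_U_one i _ h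
    exact cover_mid P i j k hk hj
  · obtain ⟨i, k, hk⟩ := exists_le_U_two _ h
    obtain ⟨j, hj⟩ := exists_le_U_one i (P.comap (LinearMap.inr F E E)) (by omega)
    exact cover_mid P i j k hk hj
  · obtain ⟨s, hs⟩ := exists_section P
    obtain ⟨p, hp⟩ := g_surj _ h (s.comp (Submodule.subtype _))
    refine ⟨.inl p, fun v hv => ⟨v.1, ?_⟩⟩
    have h0 : P.comap (LinearMap.inr F E E) = ⊥ := Submodule.finrank_eq_zero.1 (by omega)
    have h1 : v.2 - s v.1 ∈ P.comap (LinearMap.inr F E E) := by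
      have := P.sub_mem hv (hs v hv)
      rw [Submodule.mem_comap]
      convert this using 1
      ext <;> simp
    rw [h0, Submodule.mem_bot, sub_eq_zero] at h1
    refine Prod.ext rfl ?_
    rw [h1]
    exact hp ⟨v.1, ⟨v, hv, rfl⟩⟩

noncomputable def phi : (Fin 8 → F) ≃ₗ[F] E × E :=
  LinearEquiv.ofFinrankEq _ _ (by rw [Module.finrank_prod, finrankE]; simp)

end QCov

/-- $\mathcal{C}_2(8,4,3) \le 6897$. -/
theorem bound_8_4_3 : coveringNumber (ZMod 2) 8 4 3 ≤ 6897 := by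
  classical
  let S : Finset (Submodule (ZMod 2) (Fin 8 → ZMod 2)) :=
    Finset.univ.image (fun x : QCov.Idx =>
      (QCov.block x).map (QCov.phi.symm : QCov.E × QCov.E →ₗ[ZMod 2] (Fin 8 → ZMod 2)))
  have hS : S.card ≤ 6897 := by
    rw [← QCov.card_Idx]
    exact Finset.card_image_le
  refine le_trans (Nat.sInf_le ⟨S, rfl, ?_, ?_⟩) hS
  · intro X hX
    obtain ⟨x, -, rfl⟩ := Finset.mem_image.1 hX
    rw [LinearEquiv.finrank_map_eq, QCov.finrank_block]
  · intro Y hY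
    obtain ⟨x, hx⟩ := QCov.cover (Y.map (QCov.phi : (Fin 8 → ZMod 2) →ₗ[ZMod 2] QCov.E × QCov.E))
      (by rw [LinearEquiv.finrank_map_eq, hY])
    refine ⟨_, Finset.mem_image_of_mem _ (Finset.mem_univ x), fun y hy => ?_⟩
    exact ⟨QCov.phi y, hx ⟨y, hy, rfl⟩, by simp⟩
end
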